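/- arXiv:math/0007200 — 2 statements merged into one kernel-verified Lean document; each statement's English description precedes it below -/
import Mathlib

section
/- There exists a constant C such that for every measurable function f : ℍ → [0,∞], ‖M₂f‖_{L^{2,∞}(μ)} ≤ C · ‖f‖_{L^{2,1}(μ)}; that is, the noncentered maximal operator M₂ is bounded from L^{2,1}(ℍ) to L^{2,∞}(ℍ) on the hyperbolic plane. -/
open MeasureTheory ENNReal NNReal UpperHalfPlane

noncomputable section

instance : MeasurableSpace UpperHalfPlane := borel UpperHalfPlane

instance : BorelSpace UpperHalfPlane := ⟨rfl⟩

/-- The hyperbolic measure on the upper half-plane: the measure with density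
`(Im z)⁻²` with respect to two-dimensional Lebesgue measure. -/
def hypMeasure : Measure UpperHalfPlane :=
  (Measure.comap (fun z : UpperHalfPlane => (z : ℂ)) volume).withDensity
    fun z => ENNReal.ofReal (1 / z.im ^ 2)

/-- The noncentered maximal function: the supremum of the averages of `f` over all
metric balls (for the hyperbolic distance) containing the point `z`. -/
def M2 (f : UpperHalfPlane → ℝ≥0∞) (z : UpperHalfPlane) : ℝ≥0∞ :=
  ⨆ (c : UpperHalfPlane) (r : ℝ) (_ : 0 < r) (_ : z ∈ Metric.ball c r),
    (hypMeasure (Metric.ball c r))⁻¹ * ∫⁻ w in Metric.ball c r, f w ∂hypMeasure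

/-- The Lorentz quasi-norm `‖f‖_{L^{2,1}(μ)} = 2 ∫₀^∞ μ({x : f x > t})^{1/2} dt`. -/
def lorentz21 {α : Type*} [MeasurableSpace α] (μ : Measure α) (f : α → ℝ≥0∞) : ℝ≥0∞ :=
  2 * ∫⁻ t in Set.Ioi (0 : ℝ), (μ {x | ENNReal.ofReal t < f x}) ^ (1 / 2 : ℝ)

/-- The Lorentz quasi-norm `‖f‖_{L^{2,∞}(μ)} = sup_{t>0} t · μ({x : f x > t})^{1/2}`. -/
def lorentz2inf {α : Type*} [MeasurableSpace α] (μ : Measure α) (f : α → ℝ≥0∞) : ℝ≥0∞ :=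
  ⨆ (t : ℝ) (_ : 0 < t), ENNReal.ofReal t * (μ {x | ENNReal.ofReal t < f x}) ^ (1 / 2 : ℝ)

/-! ### General measure-theoretic lemmas -/

lemma hm_cauchy_schwarz {X : Type*} [MeasurableSpace X] (m : Measure X) {f g : X → ℝ≥0∞}
    (hf : Measurable f) (hg : Measurable g) :
    ∫⁻ x, f x * g x ∂m ≤ (∫⁻ x, f x ^ 2 ∂m) ^ (1 / 2 : ℝ) * (∫⁻ x, g x ^ 2 ∂m) ^ (1 / 2 : ℝ) := by
  have h := ENNReal.lintegral_mul_le_Lp_mul_Lq m Real.HolderConjugate.two_two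
    hf.aemeasurable hg.aemeasurable
  simpa using h

lemma hm_minkowski {X S : Type*} [MeasurableSpace X] [MeasurableSpace S] (m : Measure X)
    (σ : Measure S) [SFinite m] [SFinite σ] {F : S → X → ℝ≥0∞}
    (hF : Measurable (Function.uncurry F)) :
    ∫⁻ x, (∫⁻ s, F s x ∂σ) ^ 2 ∂m ≤ (∫⁻ s, (∫⁻ x, F s x ^ 2 ∂m) ^ (1 / 2 : ℝ) ∂σ) ^ 2 := by
  have hFs : ∀ s, Measurable (F s) := fun s => hF.comp measurable_prodMk_left
  have hFx : ∀ x, Measurable (fun s => F s x) := fun x => hF.comp measurable_prodMk_right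
  have e1 : ∀ x, (∫⁻ s, F s x ∂σ) ^ 2 = ∫⁻ s, ∫⁻ t, F s x * F t x ∂σ ∂σ := by
    intro x
    rw [pow_two, ← lintegral_mul_const _ (hFx x)]
    refine lintegral_congr fun s => ?_
    rw [lintegral_const_mul _ (hFx x)]
  have hA : Measurable fun s => (∫⁻ x, F s x ^ 2 ∂m) ^ (1 / 2 : ℝ) := by
    refine Measurable.pow_const ?_ _
    exact Measurable.lintegral_prod_right' (f := fun p : S × X => F p.1 p.2 ^ 2) (hF.pow_const 2)
  calc ∫⁻ x, (∫⁻ s, F s x ∂σ) ^ 2 ∂m = ∫⁻ x, ∫⁻ s, ∫⁻ t, F s x * F t x ∂σ ∂σ ∂m :=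
        lintegral_congr e1
    _ = ∫⁻ s, ∫⁻ x, ∫⁻ t, F s x * F t x ∂σ ∂m ∂σ := by
        refine lintegral_lintegral_swap ?_
        refine Measurable.aemeasurable ?_
        refine Measurable.lintegral_prod_right'
          (f := fun p : (X × S) × S => F p.1.2 p.1.1 * F p.2 p.1.1) ?_
        refine Measurable.mul ?_ ?_
        · exact hF.comp (f := fun p : (X × S) × S => (p.1.2, p.1.1)) (by fun_prop)
        · exact hF.comp (f := fun p : (X × S) × S => (p.2, p.1.1)) (by fun_prop)
    _ = ∫⁻ s, ∫⁻ t, ∫⁻ x, F s x * F t x ∂m ∂σ ∂σ := by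
        refine lintegral_congr fun s => ?_
        refine lintegral_lintegral_swap ?_
        refine Measurable.aemeasurable ?_
        refine Measurable.mul ?_ ?_
        · exact (hFs s).comp (f := fun p : X × S => p.1) (by fun_prop)
        · exact hF.comp (f := fun p : X × S => (p.2, p.1)) (by fun_prop)
    _ ≤ ∫⁻ s, ∫⁻ t, (∫⁻ x, F s x ^ 2 ∂m) ^ (1 / 2 : ℝ) * (∫⁻ x, F t x ^ 2 ∂m) ^ (1 / 2 : ℝ) ∂σ ∂σ :=
        lintegral_mono fun s => lintegral_mono fun t => hm_cauchy_schwarz m (hFs s) (hFs t)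
    _ = _ := by
        rw [pow_two, ← lintegral_mul_const _ hA]
        refine lintegral_congr fun s => ?_
        rw [lintegral_const_mul _ hA]

lemma hm_layer (a : ℝ≥0∞) :
    a = ∫⁻ s in Set.Ioi (0 : ℝ), Set.indicator {s : ℝ | ENNReal.ofReal s < a} 1 s := by
  have hm : MeasurableSet {s : ℝ | ENNReal.ofReal s < a} :=
    measurableSet_lt (by fun_prop) measurable_const
  rw [lintegral_indicator_one hm, Measure.restrict_apply hm]
  rcases eq_or_ne a ⊤ with rfl | ha
  · have : ({s : ℝ | ENNReal.ofReal s < ⊤} ∩ Set.Ioi 0) = Set.Ioi 0 := by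
      ext s; simp
    rw [this]; simp
  · have : ({s : ℝ | ENNReal.ofReal s < a} ∩ Set.Ioi 0) = Set.Ioo 0 a.toReal := by
      ext s
      simp only [Set.mem_inter_iff, Set.mem_ofPred_eq, Set.mem_Ioi, Set.mem_Ioo]
      constructor
      · rintro ⟨h1, h2⟩
        exact ⟨h2, (ENNReal.ofReal_lt_iff_lt_toReal h2.le ha).1 h1⟩
      · rintro ⟨h1, h2⟩
        exact ⟨(ENNReal.ofReal_lt_iff_lt_toReal h1.le ha).2 h2, h1⟩
    rw [this]; simp [ha]

/-- Weak type (1,1) via the Vitali covering lemma. -/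
lemma hm_vitali {X : Type*} [PseudoMetricSpace X] [TopologicalSpace.SeparableSpace X]
    [MeasurableSpace X] [OpensMeasurableSpace X] (m : Measure X) (K : ℝ≥0∞) (R : ℝ)
    (hK : ∀ (c : X) (r : ℝ), 0 < r → r ≤ R →
      m (Metric.closedBall c (5 * r)) ≤ K * m (Metric.ball c r))
    (f : X → ℝ≥0∞) (t : ℝ≥0∞) :
    t * m {x | ∃ (c : X) (r : ℝ), 0 < r ∧ r ≤ R ∧ x ∈ Metric.ball c r ∧
      t * m (Metric.ball c r) ≤ ∫⁻ w in Metric.ball c r, f w ∂m} ≤ K * ∫⁻ w, f w ∂m := by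
  set T : Set (X × ℝ) := {p | 0 < p.2 ∧ p.2 ≤ R ∧
      t * m (Metric.ball p.1 p.2) ≤ ∫⁻ w in Metric.ball p.1 p.2, f w ∂m} with hT
  obtain ⟨u, huT, hud, hcov⟩ := Vitali.exists_disjoint_subfamily_covering_enlargement_closedBall
    T (fun p => p.1) (fun p => p.2) R (fun p hp => hp.2.1) 5 (by norm_num)
  have hdisj : u.PairwiseDisjoint fun p => Metric.ball p.1 p.2 :=
    hud.mono fun p => Metric.ball_subset_closedBall
  have hcount : u.Countable := hdisj.countable_of_isOpen (fun p _ => Metric.isOpen_ball)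
    (fun p hp => ⟨p.1, Metric.mem_ball_self (huT hp).1⟩)
  have hsub : {x | ∃ (c : X) (r : ℝ), 0 < r ∧ r ≤ R ∧ x ∈ Metric.ball c r ∧
      t * m (Metric.ball c r) ≤ ∫⁻ w in Metric.ball c r, f w ∂m} ⊆
      ⋃ p ∈ u, Metric.closedBall p.1 (5 * p.2) := by
    rintro x ⟨c, r, h0, h1, h2, h3⟩
    obtain ⟨b, hb, hb'⟩ := hcov (c, r) ⟨h0, h1, h3⟩
    exact Set.mem_biUnion hb (hb' (Metric.ball_subset_closedBall h2))
  calc _ ≤ t * m (⋃ p ∈ u, Metric.closedBall p.1 (5 * p.2)) := by gcongr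
    _ ≤ t * ∑' p : u, m (Metric.closedBall p.1.1 (5 * p.1.2)) := by
        gcongr
        exact measure_biUnion_le _ hcount _
    _ ≤ t * ∑' p : u, K * m (Metric.ball p.1.1 p.1.2) := by
        gcongr with p
        exact hK _ _ (huT p.2).1 (huT p.2).2.1
    _ = K * ∑' p : u, t * m (Metric.ball p.1.1 p.1.2) := by
        rw [ENNReal.tsum_mul_left, ENNReal.tsum_mul_left]; ring
    _ ≤ K * ∑' p : u, ∫⁻ w in Metric.ball p.1.1 p.1.2, f w ∂m := by
        gcongr with p
        exact (huT p.2).2.2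
    _ = K * ∫⁻ w in ⋃ p ∈ u, Metric.ball p.1 p.2, f w ∂m := by
        rw [lintegral_biUnion hcount (fun p _ => Metric.isOpen_ball.measurableSet) hdisj]
    _ ≤ _ := by
        gcongr
        exact Measure.restrict_le_self

/-- One-dimensional dyadic centred Hardy–Littlewood maximal function. -/
def hmHL (g : ℝ → ℝ≥0∞) (x : ℝ) : ℝ≥0∞ :=
  ⨆ n : ℤ, (ENNReal.ofReal (2 * 2 ^ n))⁻¹ * ∫⁻ w in Metric.ball x ((2 : ℝ) ^ n), g w

lemma hmHL_measurable {P : Type*} [MeasurableSpace P] {g : P → ℝ → ℝ≥0∞}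
    (hg : Measurable (Function.uncurry g)) :
    Measurable (fun q : P × ℝ => hmHL (g q.1) q.2) := by
  refine Measurable.iSup fun n => Measurable.const_mul ?_ _
  have : (fun q : P × ℝ => ∫⁻ w in Metric.ball q.2 ((2 : ℝ) ^ n), g q.1 w) =
      fun q => ∫⁻ w, Set.indicator {z : (P × ℝ) × ℝ | dist z.2 z.1.2 < (2 : ℝ) ^ n}
        (fun z => g z.1.1 z.2) (q, w) := by
    funext q
    rw [← lintegral_indicator Metric.isOpen_ball.measurableSet]
    rfl
  rw [this]
  refine Measurable.lintegral_prod_right' ?_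
  refine Measurable.indicator ?_ ?_
  · exact hg.comp (f := fun z : (P × ℝ) × ℝ => (z.1.1, z.2)) (by fun_prop)
  · exact measurableSet_lt (by fun_prop) measurable_const

lemma hmHL_weak (g : ℝ → ℝ≥0∞) (t : ℝ≥0∞) :
    t * volume {x | t < hmHL g x} ≤ 5 * ∫⁻ w, g w := by
  set A : ℕ → Set ℝ := fun N => {x | ∃ (c : ℝ) (r : ℝ), 0 < r ∧ r ≤ (N : ℝ) ∧ x ∈ Metric.ball c r ∧
      t * volume (Metric.ball c r) ≤ ∫⁻ w in Metric.ball c r, g w} with hA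
  have hmono : Monotone A := by
    rintro N M h x ⟨c, r, h0, h1, h2⟩
    exact ⟨c, r, h0, h1.trans (by exact_mod_cast h), h2⟩
  have hsub : {x | t < hmHL g x} ⊆ ⋃ N, A N := by
    intro x hx
    obtain ⟨n, hn⟩ := lt_iSup_iff.1 (show t < hmHL g x from hx)
    obtain ⟨N, hN⟩ := exists_nat_ge ((2 : ℝ) ^ n)
    have hp : (0 : ℝ) < 2 ^ n := by positivity
    refine Set.mem_iUnion.2 ⟨N, x, 2 ^ n, hp, hN, Metric.mem_ball_self hp, ?_⟩
    rw [Real.volume_ball]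
    have h1 : ENNReal.ofReal (2 * 2 ^ n) ≠ 0 := by
      simp only [ne_eq, ENNReal.ofReal_eq_zero, not_le]; positivity
    rw [mul_comm, ← div_eq_mul_inv] at hn
    have := (ENNReal.le_div_iff_mul_le (Or.inl h1) (Or.inl ENNReal.ofReal_ne_top)).1 hn.le
    exact this
  calc _ ≤ t * volume (⋃ N, A N) := by gcongr
    _ = ⨆ N, t * volume (A N) := by
        rw [hmono.measure_iUnion, ENNReal.mul_iSup]
    _ ≤ _ := by
        refine iSup_le fun N => ?_
        refine hm_vitali volume 5 N ?_ g t
        intro c r hr _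
        rw [Real.volume_closedBall, Real.volume_ball]
        rw [show 2 * (5 * r) = 5 * (2 * r) by ring, ENNReal.ofReal_mul (by norm_num)]
        simp

lemma hmHL_le_one (g : ℝ → ℝ≥0∞) (hg : ∀ x, g x ≤ 1) (x : ℝ) : hmHL g x ≤ 1 := by
  refine iSup_le fun n => ?_
  have h1 : ENNReal.ofReal (2 * 2 ^ n) ≠ 0 := by
    simp only [ne_eq, ENNReal.ofReal_eq_zero, not_le]; positivity
  calc _ ≤ (ENNReal.ofReal (2 * 2 ^ n))⁻¹ * ∫⁻ w in Metric.ball x ((2 : ℝ) ^ n), 1 := by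
        gcongr with w
        exact hg w
    _ = 1 := by
        rw [setLIntegral_one, Real.volume_ball, ENNReal.inv_mul_cancel h1 ENNReal.ofReal_ne_top]

lemma hmHL_bound (g : ℝ → ℝ≥0∞) (x s : ℝ) (hs' : 0 ≤ s) :
    ∫⁻ w in Metric.closedBall x s, g w ≤ ENNReal.ofReal (4 * s) * hmHL g x := by
  rcases hs'.eq_or_lt with rfl | hs
  · simp
  obtain ⟨n, hn1, hn2⟩ := exists_mem_Ico_zpow hs (one_lt_two)
  have h1 : ENNReal.ofReal (2 * 2 ^ (n + 1)) ≠ 0 := by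
    simp only [ne_eq, ENNReal.ofReal_eq_zero, not_le]; positivity
  calc _ ≤ ∫⁻ w in Metric.ball x ((2 : ℝ) ^ (n + 1)), g w :=
        lintegral_mono_set (Metric.closedBall_subset_ball hn2)
    _ = ENNReal.ofReal (2 * 2 ^ (n + 1)) * ((ENNReal.ofReal (2 * 2 ^ (n + 1)))⁻¹ *
          ∫⁻ w in Metric.ball x ((2 : ℝ) ^ (n + 1)), g w) := by
        rw [← mul_assoc, ENNReal.mul_inv_cancel h1 ENNReal.ofReal_ne_top, one_mul]
    _ ≤ _ := by
        refine mul_le_mul' (ENNReal.ofReal_le_ofReal ?_) ?_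
        · rw [zpow_add₀ (by norm_num)]; norm_num; linarith
        · exact le_iSup (fun n : ℤ => (ENNReal.ofReal (2 * 2 ^ n))⁻¹ *
            ∫⁻ w in Metric.ball x ((2 : ℝ) ^ n), g w) (n + 1)

lemma hmHL_layer {g : ℝ → ℝ≥0∞} (hg : Measurable g) (x : ℝ) :
    hmHL g x ≤ ∫⁻ s in Set.Ioi (0 : ℝ), hmHL (Set.indicator {x' | ENNReal.ofReal s < g x'} 1) x := by
  refine iSup_le fun n => ?_
  have hjm : MeasurableSet {q : ℝ × ℝ | ENNReal.ofReal q.2 < g q.1} :=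
    measurableSet_lt (by fun_prop) (by fun_prop)
  calc (ENNReal.ofReal (2 * 2 ^ n))⁻¹ * ∫⁻ w in Metric.ball x ((2 : ℝ) ^ n), g w
      = (ENNReal.ofReal (2 * 2 ^ n))⁻¹ * ∫⁻ w in Metric.ball x ((2 : ℝ) ^ n),
          ∫⁻ s in Set.Ioi (0 : ℝ),
            Set.indicator {q : ℝ × ℝ | ENNReal.ofReal q.2 < g q.1} 1 (w, s) := by
        congr 1
        refine lintegral_congr fun w => ?_
        exact hm_layer (g w)
    _ = (ENNReal.ofReal (2 * 2 ^ n))⁻¹ * ∫⁻ s in Set.Ioi (0 : ℝ),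
          ∫⁻ w in Metric.ball x ((2 : ℝ) ^ n),
            Set.indicator {q : ℝ × ℝ | ENNReal.ofReal q.2 < g q.1} 1 (w, s) := by
        congr 1
        exact lintegral_lintegral_swap (Measurable.aemeasurable (measurable_one.indicator hjm))
    _ = ∫⁻ s in Set.Ioi (0 : ℝ), (ENNReal.ofReal (2 * 2 ^ n))⁻¹ *
          ∫⁻ w in Metric.ball x ((2 : ℝ) ^ n),
            Set.indicator {q : ℝ × ℝ | ENNReal.ofReal q.2 < g q.1} 1 (w, s) := by
        rw [lintegral_const_mul]
        exact Measurable.lintegral_prod_left' (measurable_one.indicator hjm)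
    _ ≤ _ := by
        refine lintegral_mono fun s => ?_
        exact le_iSup (fun n : ℤ => (ENNReal.ofReal (2 * 2 ^ n))⁻¹ *
            ∫⁻ w in Metric.ball x ((2 : ℝ) ^ n),
              Set.indicator {x' | ENNReal.ofReal s < g x'} (1 : ℝ → ℝ≥0∞) w) n

/-! ### The measure `dy / y²` on the half line and the product model -/

def hmNu : Measure ℝ :=
  (volume.restrict (Set.Ioi (0 : ℝ))).withDensity fun y => ENNReal.ofReal (1 / y ^ 2)

instance : SFinite hmNu := by unfold hmNu; infer_instance

lemma hm_lintegral_rpow (a p : ℝ) (ha : 0 < a) (hp : p < -1) :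
    ∫⁻ y in Set.Ioi a, ENNReal.ofReal (y ^ p) = ENNReal.ofReal (-a ^ (p + 1) / (p + 1)) := by
  rw [← integral_Ioi_rpow_of_lt hp ha]
  rw [ofReal_integral_eq_lintegral_ofReal (integrableOn_Ioi_rpow_of_lt hp ha)]
  filter_upwards [ae_restrict_mem measurableSet_Ioi] with y hy
  exact Real.rpow_nonneg (ha.le.trans (le_of_lt hy)) _

lemma hm_nu_lintegral (g : ℝ → ℝ≥0∞) (hg : Measurable g) :
    ∫⁻ y, g y ∂hmNu = ∫⁻ y in Set.Ioi (0 : ℝ), ENNReal.ofReal (1 / y ^ 2) * g y := by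
  rw [hmNu, lintegral_withDensity_eq_lintegral_mul _ (by fun_prop) hg]
  rfl

lemma hm_nu_setLIntegral_Ioi (a : ℝ) (ha : 0 < a) (g : ℝ → ℝ≥0∞) (hg : Measurable g) :
    ∫⁻ y in Set.Ioi a, g y ∂hmNu = ∫⁻ y in Set.Ioi a, ENNReal.ofReal (1 / y ^ 2) * g y := by
  rw [hmNu, setLIntegral_withDensity_eq_setLIntegral_mul _ (by fun_prop) hg measurableSet_Ioi,
    Measure.restrict_restrict measurableSet_Ioi,
    Set.inter_eq_left.2 (Set.Ioi_subset_Ioi ha.le)]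
  rfl

lemma hm_nu_Ioi (a : ℝ) (ha : 0 < a) : hmNu (Set.Ioi a) = ENNReal.ofReal (1 / a) := by
  rw [← setLIntegral_one, hm_nu_setLIntegral_Ioi a ha _ measurable_const]
  have := hm_lintegral_rpow a (-2) ha (by norm_num)
  rw [show -a ^ ((-2 : ℝ) + 1) / (-2 + 1) = 1 / a by
    norm_num [Real.rpow_neg_one]] at this
  rw [← this]
  refine setLIntegral_congr_fun measurableSet_Ioi fun y hy => ?_
  have hy0 : 0 < y := ha.trans hy
  simp [Real.rpow_neg hy0.le]

def hmW (y : ℝ) : ℝ≥0∞ := ENNReal.ofReal (Real.sqrt y)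

lemma hmW_measurable : Measurable hmW := by unfold hmW; fun_prop

lemma hm_w_tail (a : ℝ) (ha : 0 < a) :
    ∫⁻ y in Set.Ioi a, hmW y ∂hmNu = ENNReal.ofReal (2 / Real.sqrt a) := by
  rw [hm_nu_setLIntegral_Ioi a ha _ hmW_measurable]
  have := hm_lintegral_rpow a (-(3 / 2)) ha (by norm_num)
  rw [show -a ^ (-(3 / 2 : ℝ) + 1) / (-(3 / 2) + 1) = 2 / Real.sqrt a by
    rw [show -(3 / 2 : ℝ) + 1 = -(1 / 2) by norm_num, Real.rpow_neg ha.le, ← Real.sqrt_eq_rpow]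
    ring] at this
  rw [← this]
  refine setLIntegral_congr_fun measurableSet_Ioi fun y hy => ?_
  have hy0 : 0 < y := ha.trans hy
  simp only [hmW]
  rw [← ENNReal.ofReal_mul (by positivity)]
  congr 1
  rw [Real.sqrt_eq_rpow, one_div, ← Real.rpow_natCast, ← Real.rpow_neg hy0.le,
    ← Real.rpow_add hy0]
  norm_num

lemma hm_w_set (A : Set ℝ) (_hA : MeasurableSet A) :
    ∫⁻ y in A, hmW y ∂hmNu ≤ 3 * hmNu A ^ (1 / 2 : ℝ) := by
  rcases eq_or_ne (hmNu A) 0 with h0 | h0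
  · rw [Measure.restrict_eq_zero.2 h0]; simp
  rcases eq_or_ne (hmNu A) ⊤ with h1 | h1
  · rw [h1]; simp
  set m : ℝ := (hmNu A).toReal with hm
  have hmpos : 0 < m := ENNReal.toReal_pos h0 h1
  have hmA : hmNu A = ENNReal.ofReal m := (ENNReal.ofReal_toReal h1).symm
  have ha : 0 < 1 / m := by positivity
  calc ∫⁻ y in A, hmW y ∂hmNu
      ≤ ∫⁻ y in (A ∩ Set.Iic (1 / m)) ∪ Set.Ioi (1 / m), hmW y ∂hmNu := by
        refine lintegral_mono_set fun y hy => ?_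
        rcases le_or_gt y (1 / m) with h | h
        · exact Or.inl ⟨hy, h⟩
        · exact Or.inr h
    _ ≤ ∫⁻ y in A ∩ Set.Iic (1 / m), hmW y ∂hmNu + ∫⁻ y in Set.Ioi (1 / m), hmW y ∂hmNu :=
        lintegral_union_le _ _ _
    _ ≤ hmW (1 / m) * hmNu A + ENNReal.ofReal (2 / Real.sqrt (1 / m)) := by
        rw [hm_w_tail _ ha]
        gcongr
        calc _ ≤ ∫⁻ y in A ∩ Set.Iic (1 / m), hmW (1 / m) ∂hmNu := by
              refine setLIntegral_mono measurable_const fun y hy => ?_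
              exact ENNReal.ofReal_le_ofReal (Real.sqrt_le_sqrt hy.2)
          _ ≤ _ := by
              rw [setLIntegral_const]
              gcongr
              exact Set.inter_subset_left
    _ = ENNReal.ofReal (Real.sqrt (1 / m) * m + 2 / Real.sqrt (1 / m)) := by
        rw [hmA, hmW, ← ENNReal.ofReal_mul (by positivity), ENNReal.ofReal_add (by positivity)
          (by positivity)]
    _ = _ := by
        rw [hmA, ENNReal.ofReal_rpow_of_pos hmpos, ← Real.sqrt_eq_rpow,
          show (3 : ℝ≥0∞) = ENNReal.ofReal 3 by simp, ← ENNReal.ofReal_mul (by norm_num)]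
        congr 1
        have hs : 0 < Real.sqrt m := Real.sqrt_pos.2 hmpos
        have hsq : Real.sqrt m * Real.sqrt m = m := Real.mul_self_sqrt hmpos.le
        rw [Real.sqrt_div' _ hmpos.le, Real.sqrt_one]
        field_simp
        nlinarith

lemma hm_nu_level (K : ℝ≥0∞) (t : ℝ) (ht : 0 < t) :
    hmNu {y | ENNReal.ofReal t < hmW y * K} ≤ (ENNReal.ofReal t)⁻¹ ^ 2 * K ^ 2 := by
  have ht' : (ENNReal.ofReal t)⁻¹ ^ 2 ≠ 0 := by simp
  rcases eq_or_ne K 0 with rfl | h0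
  · simp
  rcases eq_or_ne K ⊤ with rfl | h1
  · rw [ENNReal.top_pow (by norm_num), ENNReal.mul_top ht']
    exact le_top
  set k := K.toReal with hk
  have hkpos : 0 < k := ENNReal.toReal_pos h0 h1
  have hK : K = ENNReal.ofReal k := (ENNReal.ofReal_toReal h1).symm
  have hsub : {y | ENNReal.ofReal t < hmW y * K} ⊆ Set.Ioi ((t / k) ^ 2) := by
    intro y hy
    change ENNReal.ofReal t < hmW y * K at hy
    rw [hK, hmW, ← ENNReal.ofReal_mul (by positivity), ENNReal.ofReal_lt_ofReal_iff_of_nonneg ht.le,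
      ← div_lt_iff₀ hkpos] at hy
    exact (Real.lt_sqrt (by positivity)).1 hy
  refine (measure_mono hsub).trans ?_
  rw [hm_nu_Ioi _ (by positivity), hK, ← ENNReal.ofReal_inv_of_pos ht,
    ← ENNReal.ofReal_pow (by positivity), ← ENNReal.ofReal_pow (by positivity),
    ← ENNReal.ofReal_mul (by positivity)]
  refine ENNReal.ofReal_le_ofReal (le_of_eq ?_)
  field_simp

/-- The key function of `x`. -/
def hmF (f : ℝ × ℝ → ℝ≥0∞) (x : ℝ) : ℝ≥0∞ :=
  ∫⁻ y, hmW y * hmHL (fun x' => f (x', y)) x ∂hmNu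

attribute [irreducible] hmHL

lemma hmHL_measurable_prod {f : ℝ × ℝ → ℝ≥0∞} (hf : Measurable f) :
    Measurable (fun p : ℝ × ℝ => hmHL (fun x' => f (x', p.2)) p.1) := by
  have h0 : Measurable (Function.uncurry fun y x' => f (x', y)) :=
    hf.comp (g := f) (f := fun p : ℝ × ℝ => (p.2, p.1)) (by fun_prop)
  have h2 : Measurable (fun p : ℝ × ℝ => (p.2, p.1)) := by fun_prop
  have h := (hmHL_measurable h0).comp h2
  simp only [Function.comp_def] at h
  exact h

lemma hmF_measurable {f : ℝ × ℝ → ℝ≥0∞} (hf : Measurable f) : Measurable (hmF f) := by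
  unfold hmF
  refine Measurable.lintegral_prod_right'
    (f := fun p : ℝ × ℝ => hmW p.2 * hmHL (fun x' => f (x', p.2)) p.1) ?_
  exact (hmW_measurable.comp measurable_snd).mul (hmHL_measurable_prod hf)

lemma hm_int_Ioo : ∫⁻ t in Set.Ioo (0 : ℝ) 1, (ENNReal.ofReal t)⁻¹ ^ (1 / 2 : ℝ) = 2 := by
  have h1 : ∫⁻ t in Set.Ioo (0 : ℝ) 1, (ENNReal.ofReal t)⁻¹ ^ (1 / 2 : ℝ) =
      ∫⁻ t in Set.Ioo (0 : ℝ) 1, ENNReal.ofReal (t ^ (-(1 / 2) : ℝ)) := by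
    refine setLIntegral_congr_fun measurableSet_Ioo fun t ht => ?_
    rw [← ENNReal.ofReal_inv_of_pos ht.1, ENNReal.ofReal_rpow_of_pos (inv_pos.2 ht.1),
      Real.inv_rpow ht.1.le, Real.rpow_neg ht.1.le]
  rw [h1, ← ofReal_integral_eq_lintegral_ofReal]
  · rw [← integral_Ioc_eq_integral_Ioo, ← intervalIntegral.integral_of_le zero_le_one,
      integral_rpow (Or.inl (by norm_num))]
    norm_num
  · have := intervalIntegral.intervalIntegrable_rpow' (a := 0) (b := 1) (r := (-(1 / 2) : ℝ))
      (by norm_num)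
    rw [intervalIntegrable_iff_integrableOn_Ioo_of_le zero_le_one] at this
    exact this
  · filter_upwards [ae_restrict_mem measurableSet_Ioo] with t ht
    exact Real.rpow_nonneg ht.1.le _

lemma hm_layer_one (a : ℝ≥0∞) (ha : a ≤ 1) :
    a = ∫⁻ s in Set.Ioo (0 : ℝ) 1, Set.indicator {s : ℝ | ENNReal.ofReal s < a} 1 s := by
  have hm : MeasurableSet {s : ℝ | ENNReal.ofReal s < a} :=
    measurableSet_lt (by fun_prop) measurable_const
  nth_rw 1 [hm_layer a]
  rw [lintegral_indicator_one hm, lintegral_indicator_one hm, Measure.restrict_apply hm,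
    Measure.restrict_apply hm]
  congr 1
  ext s
  simp only [Set.mem_inter_iff, Set.mem_ofPred_eq, Set.mem_Ioi, Set.mem_Ioo]
  constructor
  · rintro ⟨h1, h2⟩
    refine ⟨h1, h2, ?_⟩
    have := h1.trans_le ha
    simpa using this
  · tauto

lemma hm_sq_half (a : ℝ≥0∞) : (a ^ (1 / 2 : ℝ)) ^ 2 = a := by
  rw [← ENNReal.rpow_natCast, ← ENNReal.rpow_mul]; norm_num

lemma hmF_set (E : Set (ℝ × ℝ)) (hE : MeasurableSet E) :
    ∫⁻ x, hmF (E.indicator 1) x ^ 2 ≤ 180 * ((volume : Measure ℝ).prod hmNu) E := by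
  set f : ℝ × ℝ → ℝ≥0∞ := E.indicator 1 with hf
  have hfm : Measurable f := measurable_one.indicator hE
  set h : ℝ × ℝ → ℝ≥0∞ := fun p => hmHL (fun x' => f (x', p.2)) p.1 with hh
  have hhm : Measurable h := hmHL_measurable_prod hfm
  have hh1 : ∀ p, h p ≤ 1 := fun p => hmHL_le_one _ (fun x => Set.indicator_le_self' (by simp) _ |>.trans (by simp)) _
  -- the level sets
  set G : ℝ → ℝ → ℝ≥0∞ := fun t x => 3 * hmNu {y | ENNReal.ofReal t < h (x, y)} ^ (1 / 2 : ℝ) with hG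
  have hLm : MeasurableSet {q : (ℝ × ℝ) × ℝ | ENNReal.ofReal q.1.1 < h (q.1.2, q.2)} :=
    measurableSet_lt (by fun_prop) (hhm.comp (by fun_prop))
  have hGm : Measurable (Function.uncurry G) := by
    refine Measurable.const_mul (Measurable.pow_const ?_ _) _
    exact measurable_measure_prodMk_left hLm
  have hFG : ∀ x, hmF f x ≤ ∫⁻ t in Set.Ioo (0 : ℝ) 1, G t x := by
    intro x
    have hxm : ∀ t : ℝ, MeasurableSet {y | ENNReal.ofReal t < h (x, y)} := fun t =>
      measurableSet_lt measurable_const (hhm.comp (by fun_prop))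
    have hjm : MeasurableSet {q : ℝ × ℝ | ENNReal.ofReal q.2 < h (x, q.1)} :=
      measurableSet_lt (by fun_prop) (hhm.comp (by fun_prop))
    calc hmF f x = ∫⁻ y, hmW y * h (x, y) ∂hmNu := rfl
      _ = ∫⁻ y, (∫⁻ t in Set.Ioo (0 : ℝ) 1,
            hmW y * Set.indicator {q : ℝ × ℝ | ENNReal.ofReal q.2 < h (x, q.1)} 1 (y, t)) ∂hmNu := by
          refine lintegral_congr fun y => ?_
          rw [lintegral_const_mul]
          · congr 1
            exact hm_layer_one _ (hh1 _)
          · exact (measurable_one.indicator hjm).comp measurable_prodMk_left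
      _ = ∫⁻ t in Set.Ioo (0 : ℝ) 1, ∫⁻ y,
            hmW y * Set.indicator {q : ℝ × ℝ | ENNReal.ofReal q.2 < h (x, q.1)} 1 (y, t) ∂hmNu := by
          refine lintegral_lintegral_swap (Measurable.aemeasurable ?_)
          exact (hmW_measurable.comp measurable_fst).mul (measurable_one.indicator hjm)
      _ ≤ _ := by
          refine lintegral_mono fun t => ?_
          refine le_trans (le_of_eq ?_) (hm_w_set {y | ENNReal.ofReal t < h (x, y)} (hxm t))
          rw [← lintegral_indicator (hxm t)]
          refine lintegral_congr fun y => ?_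
          by_cases hy : ENNReal.ofReal t < h (x, y)
          · simp [Set.indicator, hy]
          · simp [Set.indicator, hy]
  set lam := ((volume : Measure ℝ).prod hmNu) with hlam
  have hweak : ∀ t : ℝ, 0 < t → lam {p | ENNReal.ofReal t < h p} ≤
      (ENNReal.ofReal t)⁻¹ * (5 * lam E) := by
    intro t ht
    have ht0 : ENNReal.ofReal t ≠ 0 := by simpa using ht
    have hm1 : MeasurableSet {p | ENNReal.ofReal t < h p} := measurableSet_lt measurable_const hhm
    rw [mul_comm, ← div_eq_mul_inv, ENNReal.le_div_iff_mul_le (Or.inl ht0)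
      (Or.inl ENNReal.ofReal_ne_top), mul_comm]
    rw [hlam, Measure.prod_apply_symm hm1, Measure.prod_apply_symm hE,
      ← lintegral_const_mul _ (measurable_measure_prodMk_right hm1),
      ← lintegral_const_mul _ (measurable_measure_prodMk_right hE)]
    refine lintegral_mono fun y => ?_
    refine (hmHL_weak (fun x' => f (x', y)) (ENNReal.ofReal t)).trans (le_of_eq ?_)
    congr 1
    rw [← lintegral_indicator_one (measurable_prodMk_right hE)]
    rfl
  calc ∫⁻ x, hmF f x ^ 2 ≤ ∫⁻ x, (∫⁻ t in Set.Ioo (0 : ℝ) 1, G t x) ^ 2 := by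
        gcongr with x
        exact hFG x
    _ ≤ (∫⁻ t in Set.Ioo (0 : ℝ) 1, (∫⁻ x, G t x ^ 2) ^ (1 / 2 : ℝ)) ^ 2 :=
        hm_minkowski _ _ hGm
    _ ≤ (∫⁻ t in Set.Ioo (0 : ℝ) 1, (45 * lam E) ^ (1 / 2 : ℝ) *
          (ENNReal.ofReal t)⁻¹ ^ (1 / 2 : ℝ)) ^ 2 := by
        gcongr ?_ ^ 2
        refine setLIntegral_mono' measurableSet_Ioo fun t ht => ?_
        rw [← ENNReal.mul_rpow_of_nonneg _ _ (by norm_num)]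
        refine ENNReal.rpow_le_rpow ?_ (by norm_num)
        have hm1 : MeasurableSet {p | ENNReal.ofReal t < h p} :=
          measurableSet_lt measurable_const hhm
        calc ∫⁻ x, G t x ^ 2 = ∫⁻ x, 9 * hmNu {y | ENNReal.ofReal t < h (x, y)} := by
              refine lintegral_congr fun x => ?_
              simp only [hG]
              rw [mul_pow, hm_sq_half]; norm_num
          _ = 9 * lam {p | ENNReal.ofReal t < h p} := by
              rw [hlam, Measure.prod_apply hm1,
                ← lintegral_const_mul _ (measurable_measure_prodMk_left hm1)]
              rfl
          _ ≤ 9 * ((ENNReal.ofReal t)⁻¹ * (5 * lam E)) := by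
              gcongr; exact hweak t ht.1
          _ = _ := by
              rw [show (45 : ℝ≥0∞) = 9 * 5 by norm_num]; ring
    _ = _ := by
        rw [lintegral_const_mul _ (by fun_prop), hm_int_Ioo, mul_pow, hm_sq_half]
        rw [show (180 : ℝ≥0∞) = 45 * 2 ^ 2 by norm_num]; ring

lemma hmF_general (f : ℝ × ℝ → ℝ≥0∞) (hf : Measurable f) :
    ∫⁻ x, hmF f x ^ 2 ≤ 180 * (∫⁻ s in Set.Ioi (0 : ℝ),
      ((volume : Measure ℝ).prod hmNu) {p | ENNReal.ofReal s < f p} ^ (1 / 2 : ℝ)) ^ 2 := by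
  set lam := ((volume : Measure ℝ).prod hmNu) with hlam
  set E : ℝ → Set (ℝ × ℝ) := fun s => {p | ENNReal.ofReal s < f p} with hE
  have hEm : ∀ s, MeasurableSet (E s) := fun s => measurableSet_lt measurable_const hf
  have hj : MeasurableSet {q : (ℝ × ℝ) × ℝ | ENNReal.ofReal q.1.1 < f (q.2, q.1.2)} :=
    measurableSet_lt (by fun_prop) (hf.comp (by fun_prop))
  -- joint measurability of `(s, y, x)`
  have hH : Measurable (fun q : (ℝ × ℝ) × ℝ =>
      hmHL (fun x' => (E q.1.1).indicator (1 : ℝ × ℝ → ℝ≥0∞) (x', q.1.2)) q.2) := by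
    refine hmHL_measurable
      (g := fun (q : ℝ × ℝ) x' => (E q.1).indicator (1 : ℝ × ℝ → ℝ≥0∞) (x', q.2)) ?_
    exact measurable_one.indicator hj
  have hK : Measurable (fun q : (ℝ × ℝ) × ℝ =>
      hmW q.2 * hmHL (fun x' => (E q.1.1).indicator (1 : ℝ × ℝ → ℝ≥0∞) (x', q.2)) q.1.2) := by
    refine (hmW_measurable.comp measurable_snd).mul ?_
    have h2 : Measurable (fun q : (ℝ × ℝ) × ℝ => ((q.1.1, q.2), q.1.2)) := by fun_prop
    have h := hH.comp h2
    simp only [Function.comp_def] at h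
    exact h
  have hFm : Measurable (Function.uncurry fun s x => hmF ((E s).indicator 1) x) := by
    exact Measurable.lintegral_prod_right' hK
  have hle : ∀ x, hmF f x ≤ ∫⁻ s in Set.Ioi (0 : ℝ), hmF ((E s).indicator 1) x := by
    intro x
    have hKx : Measurable (fun q : ℝ × ℝ =>
        hmW q.1 * hmHL (fun x' => (E q.2).indicator (1 : ℝ × ℝ → ℝ≥0∞) (x', q.1)) x) := by
      have h2 : Measurable (fun q : ℝ × ℝ => ((q.2, x), q.1)) := by fun_prop
      have h := hK.comp h2
      simp only [Function.comp_def] at h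
      exact h
    have hHx : ∀ y, Measurable (fun s : ℝ =>
        hmHL (fun x' => (E s).indicator (1 : ℝ × ℝ → ℝ≥0∞) (x', y)) x) := by
      intro y
      have h2 : Measurable (fun s : ℝ => ((s, y), x)) := by fun_prop
      have h := hH.comp h2
      simp only [Function.comp_def] at h
      exact h
    calc hmF f x = ∫⁻ y, hmW y * hmHL (fun x' => f (x', y)) x ∂hmNu := rfl
      _ ≤ ∫⁻ y, (∫⁻ s in Set.Ioi (0 : ℝ),
            hmW y * hmHL (fun x' => (E s).indicator (1 : ℝ × ℝ → ℝ≥0∞) (x', y)) x) ∂hmNu := by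
          refine lintegral_mono fun y => ?_
          rw [lintegral_const_mul _ (hHx y)]
          gcongr
          exact hmHL_layer (hf.comp measurable_prodMk_right) x
      _ = ∫⁻ s in Set.Ioi (0 : ℝ), ∫⁻ y,
            hmW y * hmHL (fun x' => (E s).indicator (1 : ℝ × ℝ → ℝ≥0∞) (x', y)) x ∂hmNu :=
          lintegral_lintegral_swap (Measurable.aemeasurable hKx)
      _ = _ := rfl
  calc ∫⁻ x, hmF f x ^ 2 ≤ ∫⁻ x, (∫⁻ s in Set.Ioi (0 : ℝ), hmF ((E s).indicator 1) x) ^ 2 := by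
        gcongr with x
        exact hle x
    _ ≤ (∫⁻ s in Set.Ioi (0 : ℝ), (∫⁻ x, hmF ((E s).indicator 1) x ^ 2) ^ (1 / 2 : ℝ)) ^ 2 :=
        hm_minkowski _ _ hFm
    _ ≤ (∫⁻ s in Set.Ioi (0 : ℝ), (180 : ℝ≥0∞) ^ (1 / 2 : ℝ) * lam (E s) ^ (1 / 2 : ℝ)) ^ 2 := by
        gcongr ?_ ^ 2
        refine lintegral_mono fun s => ?_
        rw [← ENNReal.mul_rpow_of_nonneg _ _ (by norm_num)]
        exact ENNReal.rpow_le_rpow (hmF_set (E s) (hEm s)) (by norm_num)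
    _ = _ := by
        rw [lintegral_const_mul' _ _ (by simp), mul_pow, hm_sq_half]

lemma hm_L2 {X : Type*} [MeasurableSpace X] (m : Measure X) [SFinite m] (f : X → ℝ≥0∞)
    (hf : Measurable f) :
    ∫⁻ x, f x ^ 2 ∂m ≤ (∫⁻ s in Set.Ioi (0 : ℝ), m {x | ENNReal.ofReal s < f x} ^ (1 / 2 : ℝ)) ^ 2 := by
  have hj : MeasurableSet {q : ℝ × X | ENNReal.ofReal q.1 < f q.2} :=
    measurableSet_lt (by fun_prop) (by fun_prop)
  have h := hm_minkowski m (volume.restrict (Set.Ioi (0 : ℝ)))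
    (F := fun s x => Set.indicator {q : ℝ × X | ENNReal.ofReal q.1 < f q.2} 1 (s, x))
    (measurable_one.indicator hj)
  refine le_trans (le_of_eq ?_) (h.trans (le_of_eq ?_))
  · refine lintegral_congr fun x => ?_
    congr 1
    exact hm_layer (f x)
  · congr 1
    refine lintegral_congr fun s => ?_
    congr 1
    have hs : MeasurableSet {x | ENNReal.ofReal s < f x} := measurableSet_lt measurable_const hf
    rw [← lintegral_indicator_one hs]
    refine lintegral_congr fun x => ?_
    by_cases hx : ENNReal.ofReal s < f x <;> simp [Set.indicator, hx]

/-! ### Coordinates on the upper half-plane -/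

def hmPsi (z : UpperHalfPlane) : ℝ × ℝ := (z.re, z.im)

lemma hmPsi_emb : MeasurableEmbedding hmPsi :=
  Complex.measurableEquivRealProd.measurableEmbedding.comp
    UpperHalfPlane.isOpenEmbedding_coe.measurableEmbedding

lemma hm_range_coe : Set.range (fun z : UpperHalfPlane => (z : ℂ)) = {z : ℂ | 0 < z.im} := by
  ext z
  constructor
  · rintro ⟨w, rfl⟩
    exact w.coe_im_pos
  · intro h
    exact ⟨⟨z, h⟩, rfl⟩

lemma hm_lintegral_psi (g : ℝ × ℝ → ℝ≥0∞) (hg : Measurable g) :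
    ∫⁻ z, g (hmPsi z) ∂hypMeasure = ∫⁻ p, g p ∂((volume : Measure ℝ).prod hmNu) := by
  have hemb : MeasurableEmbedding (fun z : UpperHalfPlane => (z : ℂ)) :=
    UpperHalfPlane.isOpenEmbedding_coe.measurableEmbedding
  have him : Measurable (fun z : UpperHalfPlane => z.im) := UpperHalfPlane.continuous_im.measurable
  set G : ℝ × ℝ → ℝ≥0∞ := fun p => ENNReal.ofReal (1 / p.2 ^ 2) * g p with hG
  have hGm : Measurable G := by fun_prop
  have hmeas : MeasurableSet {p : ℝ × ℝ | 0 < p.2} := measurableSet_lt (by fun_prop) (by fun_prop)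
  calc ∫⁻ z, g (hmPsi z) ∂hypMeasure
      = ∫⁻ z : UpperHalfPlane, (fun w : ℂ => G (Complex.measurableEquivRealProd w)) (z : ℂ)
          ∂(Measure.comap (fun z : UpperHalfPlane => (z : ℂ)) volume) := by
        have h1 : Measurable (fun z => g (hmPsi z)) := hg.comp hmPsi_emb.measurable
        rw [hypMeasure, lintegral_withDensity_eq_lintegral_mul _ (by fun_prop) h1]
        rfl
    _ = ∫⁻ w in {w : ℂ | 0 < w.im}, G (Complex.measurableEquivRealProd w) := by
        rw [← hemb.lintegral_map (fun w : ℂ => G (Complex.measurableEquivRealProd w)),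
          hemb.map_comap, hm_range_coe]
    _ = ∫⁻ p in {p : ℝ × ℝ | 0 < p.2}, G p := by
        exact (Complex.volume_preserving_equiv_real_prod.setLIntegral_comp_preimage hmeas hGm)
    _ = ∫⁻ x, ∫⁻ y in Set.Ioi (0 : ℝ), G (x, y) := by
        have : {p : ℝ × ℝ | 0 < p.2} = Set.univ ×ˢ Set.Ioi (0 : ℝ) := by ext; simp
        rw [this, Measure.volume_eq_prod, ← Measure.prod_restrict, Measure.restrict_univ,
          lintegral_prod _ hGm.aemeasurable]
    _ = _ := by
        rw [lintegral_prod _ hg.aemeasurable]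
        refine lintegral_congr fun x => ?_
        have h1 : Measurable (fun y => g (x, y)) := hg.comp measurable_prodMk_left
        rw [hm_nu_lintegral _ h1]

lemma hm_measure_psi (S : Set (ℝ × ℝ)) (hS : MeasurableSet S) :
    hypMeasure (hmPsi ⁻¹' S) = ((volume : Measure ℝ).prod hmNu) S := by
  have h := hm_lintegral_psi (S.indicator 1) (measurable_one.indicator hS)
  rw [lintegral_indicator_one hS] at h
  rw [← h, ← lintegral_indicator_one (hmPsi_emb.measurable hS)]
  rfl


lemma hm_nu_Ioc (a b : ℝ) (ha : 0 < a) (hab : a ≤ b) :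
    hmNu (Set.Ioc a b) = ENNReal.ofReal (1 / a - 1 / b) := by
  have hb : 0 < b := ha.trans_le hab
  rw [← Set.Ioi_sdiff_Ioi, measure_sdiff (Set.Ioi_subset_Ioi hab)
    measurableSet_Ioi.nullMeasurableSet (by rw [hm_nu_Ioi b hb]; simp), hm_nu_Ioi a ha,
    hm_nu_Ioi b hb, ENNReal.ofReal_sub _ (by positivity)]

lemma hm_rect (x1 x2 a b : ℝ) (hx : x1 ≤ x2) (ha : 0 < a) (hab : a ≤ b) :
    hypMeasure (hmPsi ⁻¹' (Set.Ioo x1 x2 ×ˢ Set.Ioc a b)) =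
      ENNReal.ofReal ((x2 - x1) * (1 / a - 1 / b)) := by
  rw [hm_measure_psi _ (measurableSet_Ioo.prod measurableSet_Ioc), Measure.prod_prod,
    Real.volume_Ioo, hm_nu_Ioc a b ha hab, ENNReal.ofReal_mul (by linarith)]

lemma hm_dist_coe (z w : UpperHalfPlane) :
    dist (z : ℂ) w ^ 2 = (z.re - w.re) ^ 2 + (z.im - w.im) ^ 2 := by
  rw [Complex.dist_eq, Complex.sq_norm, Complex.normSq_apply]
  simp only [Complex.sub_re, Complex.sub_im, UpperHalfPlane.coe_re, UpperHalfPlane.coe_im]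
  ring

lemma hm_ball_large (c : UpperHalfPlane) (r : ℝ) (hr : 1 ≤ r) :
    ENNReal.ofReal (Real.exp r / 4) ≤ hypMeasure (Metric.ball c r) := by
  have hc := c.im_pos
  set k := c.im with hk
  set E := Real.exp r with hE
  have hEpos : 0 < E := Real.exp_pos r
  have hE2 : 2.5 ≤ E := by
    have h1 := Real.exp_one_gt_d9
    have h2 : Real.exp 1 ≤ E := Real.exp_le_exp.2 hr
    linarith
  have hrect := hm_rect (c.re - k / 2) (c.re + k / 2) (2 * k / E) (4 * k / E) (by linarith)
    (by positivity) (by gcongr; norm_num)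
  have hval : (c.re + k / 2 - (c.re - k / 2)) * (1 / (2 * k / E) - 1 / (4 * k / E)) = E / 4 := by
    field_simp; ring
  rw [hval] at hrect
  rw [← hrect]
  refine measure_mono fun z hz => ?_
  obtain ⟨⟨hx1, hx2⟩, hy1, hy2⟩ := hz
  change c.re - k / 2 < z.re at hx1
  change z.re < c.re + k / 2 at hx2
  change 2 * k / E < z.im at hy1
  change z.im ≤ 4 * k / E at hy2
  have hzpos := z.im_pos
  set y := z.im with hy
  rw [Metric.mem_ball]
  have h0 : 0 ≤ r := by linarith
  rw [← abs_of_nonneg h0, ← abs_of_nonneg (dist_nonneg (x := z) (y := c)), ← Real.cosh_lt_cosh,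
    UpperHalfPlane.cosh_dist, hm_dist_coe]
  have hcosh : Real.cosh r = (E + 1 / E) / 2 := by
    rw [Real.cosh_eq, Real.exp_neg, one_div]
  rw [hcosh, ← lt_sub_iff_add_lt', div_lt_iff₀ (by positivity)]
  have hdx : (z.re - c.re) ^ 2 < (k / 2) ^ 2 := by
    apply sq_lt_sq' <;> linarith
  have hp : k ^ 2 / 4 ≤ (y - k / E) * (k * E - y) := by
    have h1 : k / E ≤ y - k / E := by
      have : 2 * k / E = k / E + k / E := by ring
      linarith
    have h2 : k * E - 4 * k / E ≤ k * E - y := by linarith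
    have h3 : 0 ≤ k * E - 4 * k / E := by
      have : k * E - 4 * k / E = k * (E ^ 2 - 4) / E := by field_simp
      rw [this]
      apply div_nonneg _ hEpos.le
      apply mul_nonneg hc.le
      nlinarith
    calc k ^ 2 / 4 ≤ k / E * (k * E - 4 * k / E) := by
          have : k / E * (k * E - 4 * k / E) = k ^ 2 * (1 - 4 / E ^ 2) := by field_simp
          rw [this]
          have : 4 / E ^ 2 ≤ 3 / 4 := by
            rw [div_le_iff₀ (by positivity)]; nlinarith
          nlinarith [sq_nonneg k]
      _ ≤ _ := by
          apply mul_le_mul h1 h2 h3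
          exact le_trans (by positivity) h1
  have hexp : (y - k / E) * (k * E - y) = y * k * (E + 1 / E) - y ^ 2 - k ^ 2 := by
    field_simp; ring
  rw [hexp] at hp
  change (z.re - c.re) ^ 2 + (y - k) ^ 2 < ((E + 1 / E) / 2 - 1) * (2 * y * k)
  nlinarith

lemma hm_ball_small (c : UpperHalfPlane) (r : ℝ) (hr : 0 < r) (hr1 : r ≤ 1) :
    ENNReal.ofReal (r ^ 2 / 3) ≤ hypMeasure (Metric.ball c r) := by
  have hc := c.im_pos
  set k := c.im with hk
  have hrect := hm_rect (c.re - k * r / 2) (c.re + k * r / 2) k (k * (1 + r / 2))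
    (by nlinarith [mul_pos hc hr]) hc (by nlinarith [mul_pos hc hr])
  have hval : (c.re + k * r / 2 - (c.re - k * r / 2)) * (1 / k - 1 / (k * (1 + r / 2))) =
      r ^ 2 / (2 + r) := by
    field_simp; ring
  rw [hval] at hrect
  have h3 : r ^ 2 / 3 ≤ r ^ 2 / (2 + r) := by gcongr; linarith
  refine (ENNReal.ofReal_le_ofReal h3).trans ?_
  rw [← hrect]
  refine measure_mono fun z hz => ?_
  obtain ⟨⟨hx1, hx2⟩, hy1, hy2⟩ := hz
  change c.re - k * r / 2 < z.re at hx1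
  change z.re < c.re + k * r / 2 at hx2
  change k < z.im at hy1
  change z.im ≤ k * (1 + r / 2) at hy2
  rw [Metric.mem_ball]
  refine (UpperHalfPlane.dist_le_dist_coe_div_sqrt z c).trans_lt ?_
  have hs : k ≤ Real.sqrt (z.im * c.im) := by
    apply Real.le_sqrt_of_sq_le
    rw [← hk]; nlinarith
  have hd : dist (z : ℂ) c < k * r := by
    apply lt_of_pow_lt_pow_left₀ 2 (by positivity)
    rw [hm_dist_coe]
    have h1 : (z.re - c.re) ^ 2 < (k * r / 2) ^ 2 := by apply sq_lt_sq' <;> linarith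
    have h2 : (z.im - c.im) ^ 2 ≤ (k * r / 2) ^ 2 := by
      rw [← hk]
      apply sq_le_sq' <;> nlinarith [mul_pos hc hr]
    nlinarith [sq_nonneg (k * r)]
  rw [div_lt_iff₀ (lt_of_lt_of_le hc hs)]
  nlinarith

lemma hm_exp_sub (u : ℝ) : Real.exp u - 1 ≤ u * Real.exp u := by
  have h := Real.add_one_le_exp (-u)
  have h2 : Real.exp (-u) * Real.exp u = 1 := by rw [← Real.exp_add]; simp
  nlinarith [Real.exp_pos u]

lemma hm_ball_upper (c : UpperHalfPlane) (r : ℝ) (hr : 0 < r) (hr1 : r ≤ 1) :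
    hypMeasure (Metric.closedBall c (5 * r)) ≤ ENNReal.ofReal (144 * Real.exp 18 * r ^ 2) := by
  have hc := c.im_pos
  set k := c.im with hk
  set E := Real.exp (6 * r) with hE
  have hE1 : 1 < E := Real.one_lt_exp_iff.2 (by positivity)
  have hEpos : 0 < E := by positivity
  have hrect := hm_rect (c.re - k * (E - 1)) (c.re + k * (E - 1)) (k / E) (k * E)
    (by nlinarith) (by positivity) (by
      rw [div_le_iff₀ hEpos]; nlinarith [mul_pos hc hEpos, mul_pos hc (sub_pos.2 hE1), mul_pos (mul_pos hc hEpos) (sub_pos.2 hE1)])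
  have hval : (c.re + k * (E - 1) - (c.re - k * (E - 1))) * (1 / (k / E) - 1 / (k * E)) =
      2 * (E - 1) * (E - 1 / E) := by
    field_simp; ring
  rw [hval] at hrect
  have hmain : 2 * (E - 1) * (E - 1 / E) ≤ 144 * Real.exp 18 * r ^ 2 := by
    have hE6 : E ≤ Real.exp 6 := Real.exp_le_exp.2 (by linarith)
    have h1 : E - 1 ≤ 6 * r * Real.exp 6 :=
      (hm_exp_sub (6 * r)).trans (by gcongr)
    have hEE : E * E = Real.exp (12 * r) := by rw [hE, ← Real.exp_add]; ring_nf
    have h2 : E - 1 / E ≤ 12 * r * Real.exp 12 := by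
      have h3 : E - 1 / E ≤ E * E - 1 := by
        have : E - 1 / E = (E * E - 1) / E := by field_simp
        rw [this]
        apply div_le_self _ hE1.le
        nlinarith
      refine h3.trans ?_
      rw [hEE]
      exact (hm_exp_sub (12 * r)).trans (by gcongr; linarith)
    have h4 : 0 ≤ E - 1 / E := by
      have : 1 / E ≤ 1 := by rw [div_le_one hEpos]; exact hE1.le
      linarith
    calc 2 * (E - 1) * (E - 1 / E) ≤ 2 * (6 * r * Real.exp 6) * (12 * r * Real.exp 12) := by
          gcongr
      _ = _ := by
          rw [show (18 : ℝ) = 6 + 12 by norm_num, Real.exp_add]; ring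
  refine le_trans ?_ (ENNReal.ofReal_le_ofReal hmain)
  rw [← hrect]
  refine measure_mono fun z hz => ?_
  rw [Metric.mem_closedBall] at hz
  have hlt : Real.exp (dist z c) < E := Real.exp_lt_exp.2 (by linarith)
  have h1 : dist (z : ℂ) c < k * (E - 1) :=
    (UpperHalfPlane.dist_coe_le z c).trans_lt (by rw [← hk]; gcongr)
  have h2 : |z.re - c.re| ≤ dist (z : ℂ) c := by
    rw [Complex.dist_eq]
    exact Complex.abs_re_le_norm ((z : ℂ) - c)
  have h3 := abs_lt.1 (h2.trans_lt h1)
  have h4 : z.im ≤ k * E :=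
    (UpperHalfPlane.im_le_im_mul_exp_dist z c).trans (by rw [← hk]; gcongr)
  have h5 : k / E < z.im := by
    have h6 := UpperHalfPlane.im_le_im_mul_exp_dist c z
    rw [dist_comm] at h6
    rw [div_lt_iff₀ hEpos]
    exact h6.trans_lt (by have := z.im_pos; gcongr)
  exact ⟨⟨by change c.re - k * (E - 1) < z.re; linarith,
    by change z.re < c.re + k * (E - 1); linarith⟩, h5, h4⟩

lemma hm_doubling (c : UpperHalfPlane) (r : ℝ) (hr : 0 < r) (hr1 : r ≤ 1) :
    hypMeasure (Metric.closedBall c (5 * r)) ≤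
      ENNReal.ofReal (432 * Real.exp 18) * hypMeasure (Metric.ball c r) := by
  calc _ ≤ ENNReal.ofReal (144 * Real.exp 18 * r ^ 2) := hm_ball_upper c r hr hr1
    _ = ENNReal.ofReal (432 * Real.exp 18) * ENNReal.ofReal (r ^ 2 / 3) := by
        rw [← ENNReal.ofReal_mul (by positivity)]; congr 1; ring
    _ ≤ _ := by gcongr; exact hm_ball_small c r hr hr1

lemma hm_horiz (z w : UpperHalfPlane) (r : ℝ) (h : dist z w ≤ 2 * r) :
    |w.re - z.re| ≤ Real.exp r * Real.sqrt z.im * Real.sqrt w.im := by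
  have h1 := UpperHalfPlane.sinh_half_dist z w
  have hz := z.im_pos
  have hw := w.im_pos
  have hs : 0 < Real.sqrt (z.im * w.im) := Real.sqrt_pos.2 (by positivity)
  have h2 : dist (z : ℂ) w = Real.sinh (dist z w / 2) * (2 * Real.sqrt (z.im * w.im)) := by
    rw [h1]; field_simp
  have h3 : Real.sinh (dist z w / 2) ≤ Real.exp r / 2 := by
    rw [Real.sinh_eq]
    have : Real.exp (dist z w / 2) ≤ Real.exp r := Real.exp_le_exp.2 (by linarith)
    have := Real.exp_pos (-(dist z w / 2))
    linarith
  have h4 : |w.re - z.re| ≤ dist (z : ℂ) w := by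
    rw [dist_comm, Complex.dist_eq]
    exact Complex.abs_re_le_norm ((w : ℂ) - z)
  calc _ ≤ _ := h4
    _ ≤ Real.exp r / 2 * (2 * Real.sqrt (z.im * w.im)) := by rw [h2]; gcongr
    _ = _ := by rw [Real.sqrt_mul hz.le]; ring

lemma hm_large (g : ℝ × ℝ → ℝ≥0∞) (hg : Measurable g) (z c : UpperHalfPlane) (r : ℝ) (hr : 1 ≤ r)
    (hz : z ∈ Metric.ball c r) :
    (hypMeasure (Metric.ball c r))⁻¹ * ∫⁻ w in Metric.ball c r, g (hmPsi w) ∂hypMeasure ≤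
      16 * (hmW z.im * hmF g z.re) := by
  set S : Set (ℝ × ℝ) := {p | |p.1 - z.re| ≤ Real.exp r * Real.sqrt z.im * Real.sqrt p.2} with hS
  have hSm : MeasurableSet S := measurableSet_le (by fun_prop) (by fun_prop)
  have hsub : Metric.ball c r ⊆ hmPsi ⁻¹' S := by
    intro w hw
    refine hm_horiz z w r ?_
    rw [Metric.mem_ball] at hz hw
    have := dist_triangle_right z w c
    linarith
  have hballint : ∫⁻ w in Metric.ball c r, g (hmPsi w) ∂hypMeasure ≤
      ENNReal.ofReal (4 * Real.exp r * Real.sqrt z.im) * hmF g z.re := by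
    calc _ ≤ ∫⁻ w in hmPsi ⁻¹' S, g (hmPsi w) ∂hypMeasure := lintegral_mono_set hsub
      _ = ∫⁻ w, S.indicator g (hmPsi w) ∂hypMeasure := by
          rw [← lintegral_indicator (hmPsi_emb.measurable hSm)]
          rfl
      _ = ∫⁻ y, (∫⁻ x, S.indicator g (x, y)) ∂hmNu := by
          rw [hm_lintegral_psi _ (hg.indicator hSm),
            lintegral_prod_symm _ (hg.indicator hSm).aemeasurable]
      _ ≤ ∫⁻ y, ENNReal.ofReal (4 * Real.exp r * Real.sqrt z.im) *
            (hmW y * hmHL (fun x' => g (x', y)) z.re) ∂hmNu := by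
          refine lintegral_mono fun y => ?_
          have h1 : ∫⁻ x, S.indicator g (x, y) = ∫⁻ x in Metric.closedBall z.re
              (Real.exp r * Real.sqrt z.im * Real.sqrt y), g (x, y) := by
            rw [← lintegral_indicator Metric.isClosed_closedBall.measurableSet]
            rfl
          simp only
          rw [h1]
          refine (hmHL_bound (fun x => g (x, y)) z.re _ (by positivity)).trans (le_of_eq ?_)
          rw [hmW, ← mul_assoc (ENNReal.ofReal _) (ENNReal.ofReal _), ← ENNReal.ofReal_mul (by positivity)]
          congr 2; ring
      _ = _ := by
          rw [lintegral_const_mul' _ _ ENNReal.ofReal_ne_top]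
          rfl
  have hinv : (hypMeasure (Metric.ball c r))⁻¹ ≤ ENNReal.ofReal (4 * Real.exp (-r)) := by
    have h1 := ENNReal.inv_le_inv.2 (hm_ball_large c r hr)
    rw [← ENNReal.ofReal_inv_of_pos (by positivity)] at h1
    refine h1.trans (le_of_eq ?_)
    congr 1
    rw [Real.exp_neg]; field_simp
  calc _ ≤ ENNReal.ofReal (4 * Real.exp (-r)) *
        (ENNReal.ofReal (4 * Real.exp r * Real.sqrt z.im) * hmF g z.re) := mul_le_mul' hinv hballint
    _ = _ := by
        rw [← mul_assoc, ← ENNReal.ofReal_mul (by positivity), hmW,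
          show (16 : ℝ≥0∞) = ENNReal.ofReal 16 by simp, ← mul_assoc (ENNReal.ofReal 16),
          ← ENNReal.ofReal_mul (by norm_num)]
        congr 2
        rw [show 4 * Real.exp (-r) * (4 * Real.exp r * Real.sqrt z.im) =
          16 * (Real.exp (-r) * Real.exp r) * Real.sqrt z.im by ring, ← Real.exp_add]
        simp

lemma hm_local (f : UpperHalfPlane → ℝ≥0∞) (hf : Measurable f) (c : UpperHalfPlane) (r : ℝ)
    (hr : 0 < r) (hr1 : r ≤ 1) (t : ℝ≥0∞)
    (h : t < (hypMeasure (Metric.ball c r))⁻¹ * ∫⁻ w in Metric.ball c r, f w ∂hypMeasure) :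
    t ^ 2 * hypMeasure (Metric.ball c r) ≤ ∫⁻ w in Metric.ball c r, f w ^ 2 ∂hypMeasure := by
  set m := hypMeasure (Metric.ball c r) with hm
  have hm0 : m ≠ 0 := by
    have h1 := hm_ball_small c r hr hr1
    have h2 : 0 < ENNReal.ofReal (r ^ 2 / 3) := by rw [ENNReal.ofReal_pos]; positivity
    exact (h2.trans_le h1).ne'
  have hmt : m ≠ ⊤ := by
    have h1 := hm_ball_upper c r hr hr1
    have h2 : m ≤ hypMeasure (Metric.closedBall c (5 * r)) :=
      measure_mono (Metric.ball_subset_closedBall.trans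
        (Metric.closedBall_subset_closedBall (by linarith)))
    exact ne_top_of_le_ne_top ENNReal.ofReal_ne_top (h2.trans h1)
  rw [mul_comm, ← div_eq_mul_inv] at h
  have h1 := (ENNReal.le_div_iff_mul_le (Or.inl hm0) (Or.inl hmt)).1 h.le
  have h2 := hm_cauchy_schwarz (hypMeasure.restrict (Metric.ball c r)) hf
    (measurable_const (a := (1 : ℝ≥0∞)))
  simp only [mul_one, one_pow, lintegral_const, Measure.restrict_apply_univ, one_mul] at h2
  have h3 := h1.trans h2
  have h4 : (t * m) ^ 2 ≤ (∫⁻ w in Metric.ball c r, f w ^ 2 ∂hypMeasure) * m := by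
    calc _ ≤ _ := pow_le_pow_left' h3 2
      _ = _ := by rw [mul_pow, hm_sq_half, hm_sq_half]
  rw [show (t * m) ^ 2 = t ^ 2 * m * m by ring] at h4
  exact (ENNReal.mul_le_mul_iff_left hm0 hmt).1 h4

/-- The noncentered maximal operator `M₂` is bounded from `L^{2,1}(ℍ)` to `L^{2,∞}(ℍ)`
on the hyperbolic plane. -/
theorem M2_L21_L2inf :
    ∃ C : ℝ≥0, ∀ f : UpperHalfPlane → ℝ≥0∞, Measurable f →
      lorentz2inf hypMeasure (M2 f) ≤ C * lorentz21 hypMeasure f := by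
  refine ⟨Real.toNNReal (432 * Real.exp 18) + 46080, fun f hf => ?_⟩
  set K : ℝ≥0∞ := ENNReal.ofReal (432 * Real.exp 18) with hK
  have hC : ((Real.toNNReal (432 * Real.exp 18) + 46080 : ℝ≥0) : ℝ≥0∞) = K + 46080 := by
    simp [hK, ENNReal.ofReal]
  rw [hC]
  set g : ℝ × ℝ → ℝ≥0∞ := Function.extend hmPsi f 0 with hg
  have hgm : Measurable g := hmPsi_emb.measurable_extend hf measurable_zero
  have hgf : ∀ z, g (hmPsi z) = f z := fun z => hmPsi_emb.injective.extend_apply _ _ _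
  set lam := ((volume : Measure ℝ).prod hmNu) with hlam
  have hlev : ∀ s : ℝ, lam {p | ENNReal.ofReal s < g p} = hypMeasure {z | ENNReal.ofReal s < f z} := by
    intro s
    rw [← hm_measure_psi _ (measurableSet_lt measurable_const hgm)]
    congr 1
    ext z
    simp [hgf]
  set N : ℝ≥0∞ := ∫⁻ s in Set.Ioi (0 : ℝ), hypMeasure {z | ENNReal.ofReal s < f z} ^ (1 / 2 : ℝ)
    with hN
  have hNg : ∫⁻ s in Set.Ioi (0 : ℝ), lam {p | ENNReal.ofReal s < g p} ^ (1 / 2 : ℝ) = N := by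
    simp only [hlev, hN]
  have hL2 : ∫⁻ z, f z ^ 2 ∂hypMeasure ≤ N ^ 2 := by
    have h1 := hm_lintegral_psi (fun p => g p ^ 2) (hgm.pow_const 2)
    simp only [hgf] at h1
    rw [h1, ← hNg]
    exact hm_L2 _ g hgm
  have hF2 : ∫⁻ x, hmF g x ^ 2 ≤ 180 * N ^ 2 := by
    rw [← hNg]
    exact hmF_general g hgm
  refine iSup_le fun t => iSup_le fun ht => ?_
  set T := ENNReal.ofReal t with hT
  have hT0 : T ≠ 0 := by simpa [hT] using ht
  have hTt : T ≠ ⊤ := ENNReal.ofReal_ne_top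
  set L : Set UpperHalfPlane := {z | ∃ (c : UpperHalfPlane) (r : ℝ), 0 < r ∧ r ≤ 1 ∧
    z ∈ Metric.ball c r ∧ T ^ 2 * hypMeasure (Metric.ball c r) ≤
      ∫⁻ w in Metric.ball c r, f w ^ 2 ∂hypMeasure} with hL
  set G : Set (ℝ × ℝ) := {p | ENNReal.ofReal (t / 16) < hmW p.2 * hmF g p.1} with hG
  have hGm : MeasurableSet G := measurableSet_lt measurable_const
    ((hmW_measurable.comp measurable_snd).mul ((hmF_measurable hgm).comp measurable_fst))
  have hsub : {z | T < M2 f z} ⊆ L ∪ hmPsi ⁻¹' G := by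
    intro z hz
    change T < M2 f z at hz
    simp only [M2, lt_iSup_iff] at hz
    obtain ⟨c, r, hr, hzc, hlt⟩ := hz
    rcases le_or_gt r 1 with hr1 | hr1
    · exact Or.inl ⟨c, r, hr, hr1, hzc, hm_local f hf c r hr hr1 T hlt⟩
    · right
      have h1 := hm_large g hgm z c r hr1.le hzc
      simp only [hgf] at h1
      have h2 := hlt.trans_le h1
      change ENNReal.ofReal (t / 16) < hmW z.im * hmF g z.re
      rw [ENNReal.ofReal_div_of_pos (by norm_num)]
      refine ENNReal.div_lt_of_lt_mul' ?_
      simpa using h2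
  have hLm : T ^ 2 * hypMeasure L ≤ K * N ^ 2 := by
    refine (hm_vitali hypMeasure K 1 (fun c r h0 h1 => hm_doubling c r h0 h1)
      (fun z => f z ^ 2) (T ^ 2)).trans ?_
    gcongr
  have hGb : T ^ 2 * hypMeasure (hmPsi ⁻¹' G) ≤ 46080 * N ^ 2 := by
    rw [hm_measure_psi G hGm, Measure.prod_apply hGm]
    calc _ ≤ T ^ 2 * ∫⁻ x, (ENNReal.ofReal (t / 16))⁻¹ ^ 2 * hmF g x ^ 2 := by
          gcongr with x
          exact hm_nu_level (hmF g x) (t / 16) (by positivity)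
      _ = T ^ 2 * ((ENNReal.ofReal (t / 16))⁻¹ ^ 2 * ∫⁻ x, hmF g x ^ 2) := by
          rw [lintegral_const_mul _ ((hmF_measurable hgm).pow_const 2)]
      _ ≤ T ^ 2 * ((ENNReal.ofReal (t / 16))⁻¹ ^ 2 * (180 * N ^ 2)) := by gcongr
      _ = _ := by
          rw [← mul_assoc, ← mul_pow, hT, ← ENNReal.ofReal_inv_of_pos (by positivity),
            ← ENNReal.ofReal_mul ht.le, show t * (t / 16)⁻¹ = 16 by field_simp]
          rw [show (46080 : ℝ≥0∞) = 16 ^ 2 * 180 by norm_num]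
          simp; ring
  have hall : T ^ 2 * hypMeasure {z | T < M2 f z} ≤ (K + 46080) * N ^ 2 := by
    calc _ ≤ T ^ 2 * (hypMeasure L + hypMeasure (hmPsi ⁻¹' G)) := by
          gcongr
          exact (measure_mono hsub).trans (measure_union_le _ _)
      _ ≤ K * N ^ 2 + 46080 * N ^ 2 := by rw [mul_add]; gcongr
      _ = _ := by ring
  have h1C : (1 : ℝ≥0∞) ≤ K + 46080 := le_add_left (by norm_num)
  have hfin : T * hypMeasure {z | T < M2 f z} ^ (1 / 2 : ℝ) ≤ (K + 46080) * N := by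
    rw [← ENNReal.pow_le_pow_left_iff (n := 2) (by norm_num), mul_pow, hm_sq_half, mul_pow]
    refine hall.trans ?_
    gcongr
    exact le_self_pow h1C (by norm_num)
  refine hfin.trans ?_
  rw [lorentz21]
  gcongr
  exact le_mul_of_one_le_left (by positivity) (by norm_num)

end
end

section
/- For every p with 2 < p < ∞ there exists a constant C_p such that for every measurable function f : ℍ → [0,∞], ∫_ℍ (M₂f)^p dμ ≤ C_p ∫_ℍ f^p dμ; that is, the noncentered maximal operator M₂ is bounded on L^p(ℍ) for every p ∈ (2,∞). -/
open MeasureTheory ENNReal NNReal UpperHalfPlane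

noncomputable section

open Set Metric

lemma layer_aux (a : ℝ) (ha : 0 < a) (t : ℝ≥0∞) :
    ∫⁻ s in Ioi (0:ℝ), (if ENNReal.ofReal s < t then ENNReal.ofReal (s ^ (a - 1)) else 0)
      = ENNReal.ofReal (1 / a) * t ^ a := by
  have key : ∀ T : ℝ, 0 ≤ T → ∫⁻ s in Ioc (0:ℝ) T, ENNReal.ofReal (s ^ (a - 1))
      = ENNReal.ofReal (1 / a * T ^ a) := by
    intro T hT
    have hi : IntegrableOn (fun s : ℝ => s ^ (a - 1)) (Ioc 0 T) := by
      have := intervalIntegral.intervalIntegrable_rpow' (a := 0) (b := T) (r := a - 1) (by linarith)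
      exact (intervalIntegrable_iff_integrableOn_Ioc_of_le hT).1 this
    rw [← ofReal_integral_eq_lintegral_ofReal hi]
    · rw [← intervalIntegral.integral_of_le hT, integral_rpow (Or.inl (by linarith))]
      congr 1
      simp [Real.zero_rpow ha.ne']
      ring
    · filter_upwards [ae_restrict_mem measurableSet_Ioc] with s hs
      exact Real.rpow_nonneg hs.1.le _
  by_cases ht : t = ⊤
  · subst ht
    simp only [ENNReal.ofReal_lt_top, if_true]
    rw [ENNReal.top_rpow_of_pos ha, ENNReal.mul_top (by simpa using ha)]
    by_contra hne
    refine not_integrableOn_Ioi_rpow (a - 1) ⟨?_, ?_⟩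
    · exact (measurable_id.pow_const _).aestronglyMeasurable
    · rw [hasFiniteIntegral_iff_norm]
      refine lt_of_le_of_lt (le_of_eq ?_) (lt_top_iff_ne_top.2 hne)
      refine setLIntegral_congr_fun measurableSet_Ioi ?_
      intro s hs
      simp only [Real.norm_eq_abs]
      rw [abs_of_nonneg (Real.rpow_nonneg (le_of_lt hs) _)]
  · lift t to ℝ≥0 using ht
    have h1 : ∫⁻ s in Ioi (0:ℝ), (if ENNReal.ofReal s < t then ENNReal.ofReal (s ^ (a - 1)) else 0)
       = ∫⁻ s in Ioo (0:ℝ) t, ENNReal.ofReal (s ^ (a - 1)) := by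
      rw [← lintegral_indicator measurableSet_Ioi, ← lintegral_indicator measurableSet_Ioo]
      congr 1
      ext s
      by_cases hs : 0 < s
      · by_cases hst : s < t
        · simp [indicator, hs, hst, ENNReal.ofReal_lt_coe_iff hs.le]
        · simp [indicator, hs, hst, ENNReal.ofReal_lt_coe_iff hs.le]
      · simp [indicator, hs]
    rw [h1, setLIntegral_congr Ioo_ae_eq_Ioc, key t t.2, ENNReal.ofReal_mul (by positivity),
      ← ENNReal.ofReal_rpow_of_nonneg (NNReal.coe_nonneg t) ha.le]
    simp

lemma layer_meas {X : Type*} [MeasurableSpace X] (f : X → ℝ≥0∞) (hf : Measurable f) (a : ℝ) :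
    Measurable (fun z : X × ℝ => 
      if ENNReal.ofReal z.2 < f z.1 then ENNReal.ofReal (z.2 ^ (a - 1)) else 0) := by
  refine Measurable.ite ?_ ?_ measurable_const
  · exact measurableSet_lt (by fun_prop) (by fun_prop)
  · fun_prop

lemma layer_aux2 (p q : ℝ) (hq : 0 < q) (hpq : q < p) (t : ℝ≥0∞) :
    ∫⁻ s in Ioi (0:ℝ), ENNReal.ofReal (s ^ (p - 1)) *
        ((if ENNReal.ofReal s < t then t else 0) / ENNReal.ofReal s) ^ q
      ≤ ENNReal.ofReal (1 / (p - q)) * t ^ p := by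
  have : ∀ s ∈ Ioi (0:ℝ), ENNReal.ofReal (s ^ (p - 1)) *
        ((if ENNReal.ofReal s < t then t else 0) / ENNReal.ofReal s) ^ q
      = t ^ q * (if ENNReal.ofReal s < t then ENNReal.ofReal (s ^ ((p - q) - 1)) else 0) := by
    intro s hs
    have hs : 0 < s := hs
    split_ifs
    · rw [ENNReal.div_rpow_of_nonneg _ _ hq.le, ENNReal.ofReal_rpow_of_pos hs,
        div_eq_mul_inv, ← ENNReal.ofReal_inv_of_pos (by positivity), mul_left_comm, 
        ← ENNReal.ofReal_mul (by positivity), ← Real.rpow_neg hs.le, ← Real.rpow_add hs]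
      congr 3
      ring
    · simp [ENNReal.zero_rpow_of_pos hq]
  rw [setLIntegral_congr_fun measurableSet_Ioi this, lintegral_const_mul, layer_aux _ (by linarith)]
  · rw [mul_left_comm, ← ENNReal.rpow_add_of_nonneg _ _ hq.le (by linarith)]
    simp
  · exact (layer_meas (fun _ : Unit => t) measurable_const (p - q)).comp 
      (measurable_const (a := ()) |>.prodMk measurable_id)

/-- interpolation for a pair of functions -/
lemma interp {X : Type*} [MeasurableSpace X] (μ : Measure X) [SFinite μ] (U f : X → ℝ≥0∞)
    (hU : Measurable U) (hf : Measurable f) (p q₁ q₂ : ℝ) (h1 : 0 < q₁) (h2 : 0 < q₂)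
    (h1p : q₁ < p) (h2p : q₂ < p) (K : ℝ≥0∞)
    (H : ∀ s : ℝ, 0 < s → μ {x | ENNReal.ofReal s < U x} ≤
      K * (∫⁻ x, ((if ENNReal.ofReal s < f x then f x else 0) / ENNReal.ofReal s) ^ q₁ ∂μ
       + ∫⁻ x, ((if ENNReal.ofReal s < f x then f x else 0) / ENNReal.ofReal s) ^ q₂ ∂μ)) :
    ∫⁻ x, U x ^ p ∂μ ≤ ENNReal.ofReal p * K * (ENNReal.ofReal (1 / (p - q₁)) + 
      ENNReal.ofReal (1 / (p - q₂))) * ∫⁻ x, f x ^ p ∂μ := by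
  have hp : 0 < p := by linarith
  have e1 : ∫⁻ x, U x ^ p ∂μ = ENNReal.ofReal p * ∫⁻ s in Ioi (0:ℝ), 
      ENNReal.ofReal (s ^ (p - 1)) * μ {x | ENNReal.ofReal s < U x} := by
    have : ∀ x, U x ^ p = ENNReal.ofReal p * ∫⁻ s in Ioi (0:ℝ), 
       (if ENNReal.ofReal s < U x then ENNReal.ofReal (s ^ (p - 1)) else 0) := by
      intro x
      rw [layer_aux p hp, ← mul_assoc, ← ENNReal.ofReal_mul hp.le]
      simp [hp.ne']
    simp_rw [this]
    rw [lintegral_const_mul, lintegral_lintegral_swap]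
    · congr 2
      ext s
      have : ∀ x, (if ENNReal.ofReal s < U x then ENNReal.ofReal (s ^ (p - 1)) else 0)
        = indicator {x | ENNReal.ofReal s < U x} (fun _ => ENNReal.ofReal (s ^ (p - 1))) x := by
        intro x; simp [indicator]
      simp_rw [this]
      rw [lintegral_indicator_const (measurableSet_lt measurable_const hU)]
    · exact (layer_meas U hU p).aemeasurable
    · exact (layer_meas U hU p).lintegral_prod_right'
  have hm : ∀ q : ℝ, Measurable (fun z : ℝ × X => ENNReal.ofReal (z.1 ^ (p - 1)) *
        ((if ENNReal.ofReal z.1 < f z.2 then f z.2 else 0) / ENNReal.ofReal z.1) ^ q) := by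
    intro q
    have : Measurable (fun z : ℝ × X => if ENNReal.ofReal z.1 < f z.2 then f z.2 else 0) :=
      Measurable.ite (measurableSet_lt (by fun_prop) (by fun_prop)) (by fun_prop) measurable_const
    fun_prop
  have e2 : ∀ q : ℝ, 0 < q → q < p → ∫⁻ s in Ioi (0:ℝ), ENNReal.ofReal (s ^ (p - 1)) * 
      ∫⁻ x, ((if ENNReal.ofReal s < f x then f x else 0) / ENNReal.ofReal s) ^ q ∂μ
      ≤ ENNReal.ofReal (1 / (p - q)) * ∫⁻ x, f x ^ p ∂μ := by
    intro q hq hqp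
    have : ∀ s, ENNReal.ofReal (s ^ (p - 1)) * 
      ∫⁻ x, ((if ENNReal.ofReal s < f x then f x else 0) / ENNReal.ofReal s) ^ q ∂μ
       = ∫⁻ x, ENNReal.ofReal (s ^ (p - 1)) * 
      ((if ENNReal.ofReal s < f x then f x else 0) / ENNReal.ofReal s) ^ q ∂μ := by
      intro s
      rw [lintegral_const_mul' _ _ ENNReal.ofReal_ne_top]
    simp_rw [this]
    rw [lintegral_lintegral_swap (hm q).aemeasurable, ← lintegral_const_mul _ (by fun_prop)]
    exact lintegral_mono fun x => layer_aux2 p q hq hqp (f x)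
  rw [e1, mul_assoc, mul_assoc]
  gcongr
  have hmi : ∀ q : ℝ, Measurable (fun s : ℝ => ENNReal.ofReal (s ^ (p - 1)) * 
      ∫⁻ x, ((if ENNReal.ofReal s < f x then f x else 0) / ENNReal.ofReal s) ^ q ∂μ) := by
    intro q
    have := (hm q).lintegral_prod_right' (ν := μ)
    convert this using 2 with s
    dsimp only
    rw [lintegral_const_mul' _ _ ENNReal.ofReal_ne_top]
  calc ∫⁻ s in Ioi (0:ℝ), ENNReal.ofReal (s ^ (p - 1)) * μ {x | ENNReal.ofReal s < U x} 
      ≤ ∫⁻ s in Ioi (0:ℝ), K * (ENNReal.ofReal (s ^ (p - 1)) * 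
      ∫⁻ x, ((if ENNReal.ofReal s < f x then f x else 0) / ENNReal.ofReal s) ^ q₁ ∂μ
      + ENNReal.ofReal (s ^ (p - 1)) * 
      ∫⁻ x, ((if ENNReal.ofReal s < f x then f x else 0) / ENNReal.ofReal s) ^ q₂ ∂μ) := by
        refine setLIntegral_mono' measurableSet_Ioi fun s hs => ?_
        rw [← mul_add, mul_left_comm]
        gcongr
        exact H s hs
    _ ≤ _ := by
        have hadd := (hmi q₁).add (hmi q₂)
        simp only [Pi.add_def] at hadd
        rw [lintegral_const_mul _ hadd, lintegral_add_left (hmi q₁), add_mul]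
        gcongr
        · exact e2 q₁ h1 h1p
        · exact e2 q₂ h2 h2p

/-- noncentered maximal function over a family of balls -/
def MA {X : Type*} [PseudoMetricSpace X] [MeasurableSpace X] (μ : Measure X) (S : Set (X × ℝ))
    (f : X → ℝ≥0∞) (x : X) : ℝ≥0∞ :=
  ⨆ b ∈ S, ⨆ (_ : x ∈ ball b.1 b.2), (μ (ball b.1 b.2))⁻¹ * ∫⁻ w in ball b.1 b.2, f w ∂μ

section MAsec

variable {X : Type*} [PseudoMetricSpace X] [MeasurableSpace X] 

lemma lt_MA {μ : Measure X} {S : Set (X × ℝ)} {f : X → ℝ≥0∞} {x : X} {a : ℝ≥0∞} :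
    a < MA μ S f x ↔ ∃ b ∈ S, x ∈ ball b.1 b.2 ∧ 
      a < (μ (ball b.1 b.2))⁻¹ * ∫⁻ w in ball b.1 b.2, f w ∂μ := by
  simp only [MA, lt_iSup_iff, exists_prop]

lemma le_MA {μ : Measure X} {S : Set (X × ℝ)} {f : X → ℝ≥0∞} {x : X} {b : X × ℝ}
    (hb : b ∈ S) (hx : x ∈ ball b.1 b.2) :
      (μ (ball b.1 b.2))⁻¹ * ∫⁻ w in ball b.1 b.2, f w ∂μ ≤ MA μ S f x := by
  unfold MA
  exact le_iSup₂_of_le b hb (le_iSup_of_le hx le_rfl)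

lemma MA_trunc (μ : Measure X) (S : Set (X × ℝ)) (f : X → ℝ≥0∞) (s : ℝ≥0∞) (x : X) :
    MA μ S f x ≤ MA μ S (fun x => if s < f x then f x else 0) x + s := by
  unfold MA
  refine iSup₂_le fun b hb => iSup_le fun hx => ?_
  calc (μ (ball b.1 b.2))⁻¹ * ∫⁻ w in ball b.1 b.2, f w ∂μ 
      ≤ (μ (ball b.1 b.2))⁻¹ * ∫⁻ w in ball b.1 b.2, ((if s < f w then f w else 0) + s) ∂μ := by
        gcongr with w
        split_ifs with h
        · exact le_self_add
        · simpa using h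
    _ = (μ (ball b.1 b.2))⁻¹ * ∫⁻ w in ball b.1 b.2, (if s < f w then f w else 0) ∂μ
        + ((μ (ball b.1 b.2))⁻¹ * μ (ball b.1 b.2)) * s := by
        rw [lintegral_add_right _ measurable_const, mul_add]
        simp only [lintegral_const, Measure.restrict_apply MeasurableSet.univ, univ_inter]
        ring
    _ ≤ _ := by
        gcongr
        · exact le_MA (f := fun x => if s < f x then f x else 0) hb hx
        · calc _ ≤ 1 * s := by
                gcongr
                exact ENNReal.inv_mul_le_one _
            _ = s := one_mul s

lemma MA_half (μ : Measure X) (S : Set (X × ℝ)) (f : X → ℝ≥0∞) (s : ℝ) (x : X)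
    (h : ENNReal.ofReal s < 2⁻¹ * MA μ S f x) :
    ENNReal.ofReal s < MA μ S (fun x => if ENNReal.ofReal s < f x then f x else 0) x := by
  by_contra hc
  have h1 := MA_trunc μ S f (ENNReal.ofReal s) x
  have h2 : MA μ S f x ≤ 2 * ENNReal.ofReal s := by
    rw [two_mul]
    exact h1.trans (by gcongr; exact not_lt.1 hc)
  have : 2⁻¹ * MA μ S f x ≤ 2⁻¹ * (2 * ENNReal.ofReal s) := by gcongr
  rw [← mul_assoc, ENNReal.inv_mul_cancel (by simp) (by simp), one_mul] at this
  exact absurd h (not_lt.2 this)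

lemma MA_measurable [BorelSpace X] (μ : Measure X) (S : Set (X × ℝ)) (f : X → ℝ≥0∞) :
    Measurable (MA μ S f) := by
  refine measurable_of_Ioi fun a => IsOpen.measurableSet ?_
  rw [isOpen_iff_forall_mem_open]
  intro x hx
  obtain ⟨b, hb, hxb, h⟩ := lt_MA.1 hx
  exact ⟨ball b.1 b.2, fun y hy => lt_MA.2 ⟨b, hb, hy, h⟩, isOpen_ball, hxb⟩

lemma weak11 [SecondCountableTopology X] [BorelSpace X] (μ : Measure X) (T : Set (X × ℝ)) (R : ℝ)
    (K L : ℝ≥0∞) (f : X → ℝ≥0∞)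
    (h0 : ∀ b ∈ T, 0 < b.2) (hR : ∀ b ∈ T, b.2 ≤ R)
    (hK : ∀ b ∈ T, μ (closedBall b.1 (5 * b.2)) ≤ K * μ (ball b.1 b.2))
    (hL : ∀ b ∈ T, L * μ (ball b.1 b.2) ≤ ∫⁻ w in ball b.1 b.2, f w ∂μ) :
    L * μ (⋃ b ∈ T, ball b.1 b.2) ≤ K * ∫⁻ w, f w ∂μ := by
  obtain ⟨u, huT, hd, hu⟩ := Vitali.exists_disjoint_subfamily_covering_enlargement_closedBall
    T (fun b => b.1) (fun b => b.2) R hR 5 (by norm_num)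
  have hd' : u.PairwiseDisjoint (fun b => ball b.1 b.2) := 
    hd.mono fun b => ball_subset_closedBall
  have hc : u.Countable := hd'.countable_of_isOpen (fun b _ => isOpen_ball) 
    (fun b hb => ⟨b.1, mem_ball_self (h0 b (huT hb))⟩)
  calc L * μ (⋃ b ∈ T, ball b.1 b.2) 
      ≤ L * μ (⋃ b ∈ u, closedBall b.1 (5 * b.2)) := by
        refine mul_le_mul_right (measure_mono ?_) _
        refine iUnion₂_subset fun b hb => ?_
        obtain ⟨c, hc, hbc⟩ := hu b hb
        exact ball_subset_closedBall.trans (hbc.trans (subset_biUnion_of_mem (u := fun c : X × ℝ => closedBall c.1 (5 * c.2)) hc))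
    _ ≤ L * ∑' b : u, μ (closedBall b.1.1 (5 * b.1.2)) := by
        gcongr
        exact measure_biUnion_le _ hc _
    _ ≤ L * ∑' b : u, K * μ (ball b.1.1 b.1.2) := by
        gcongr with b
        exact hK _ (huT b.2)
    _ = K * ∑' b : u, L * μ (ball b.1.1 b.1.2) := by
        rw [ENNReal.tsum_mul_left, ENNReal.tsum_mul_left]; ring
    _ ≤ K * ∑' b : u, ∫⁻ w in ball b.1.1 b.1.2, f w ∂μ := by
        gcongr with b
        exact hL _ (huT b.2)
    _ = K * ∫⁻ w in ⋃ b ∈ u, ball b.1 b.2, f w ∂μ := by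
        rw [lintegral_biUnion hc (fun b _ => measurableSet_ball) hd']
    _ ≤ K * ∫⁻ w, f w ∂μ := by
        exact mul_le_mul_right (setLIntegral_le_lintegral _ _) _

lemma MA_strong [SecondCountableTopology X] [BorelSpace X] (μ : Measure X) [SFinite μ] 
    (S : Set (X × ℝ)) (K : ℝ≥0∞) (hK1 : 1 ≤ K)
    (h0 : ∀ b ∈ S, 0 < b.2) (hR : ∀ b ∈ S, ENNReal.ofReal b.2 ≤ 2 + μ (ball b.1 b.2))
    (hK : ∀ b ∈ S, μ (closedBall b.1 (5 * b.2)) ≤ K * μ (ball b.1 b.2))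
    (hz : ∀ b ∈ S, μ (ball b.1 b.2) ≠ 0) (ht : ∀ b ∈ S, μ (ball b.1 b.2) ≠ ⊤)
    (q : ℝ) (hq : 1 < q) (f : X → ℝ≥0∞) (hf : Measurable f) :
    ∫⁻ x, MA μ S f x ^ q ∂μ ≤ 
      2 ^ q * (ENNReal.ofReal q * K * (ENNReal.ofReal (1 / (q - 1)) + ENNReal.ofReal (1 / (q - 1))))
        * ∫⁻ x, f x ^ q ∂μ := by
  have hm := MA_measurable μ S f
  have main := interp μ (fun x => 2⁻¹ * MA μ S f x) f (hm.const_mul _) hf q 1 1 one_pos one_pos hq hq K ?_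
  · have : ∀ x, MA μ S f x ^ q = 2 ^ q * (2⁻¹ * MA μ S f x) ^ q := by
      intro x
      rw [← ENNReal.mul_rpow_of_nonneg _ _ (by linarith), ← mul_assoc, 
        ENNReal.mul_inv_cancel (by simp) (by simp), one_mul]
    simp_rw [this]
    rw [lintegral_const_mul _ (by fun_prop), mul_assoc]
    gcongr
  · intro s hs
    set h : X → ℝ≥0∞ := fun x => if ENNReal.ofReal s < f x then f x else 0 with hh
    simp only [ENNReal.rpow_one]
    refine le_trans ?_ (mul_le_mul_right le_self_add K)
    have hs0 : ENNReal.ofReal s ≠ 0 := by simpa using hs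
    have hst : ENNReal.ofReal s ≠ ⊤ := ENNReal.ofReal_ne_top
    have e : ∫⁻ x, h x / ENNReal.ofReal s ∂μ = (∫⁻ x, h x ∂μ) / ENNReal.ofReal s := by
      simp_rw [div_eq_mul_inv]
      rw [lintegral_mul_const' _ _ (by simpa using hs)]
    change _ ≤ K * ∫⁻ x, h x / ENNReal.ofReal s ∂μ
    rw [e]
    by_cases htop : ∫⁻ x, h x ∂μ = ⊤
    · rw [htop, ENNReal.top_div_of_ne_top hst, ENNReal.mul_top (by positivity)]
      exact le_top
    set T : Set (X × ℝ) := {b ∈ S | ENNReal.ofReal s * μ (ball b.1 b.2) ≤ ∫⁻ w in ball b.1 b.2, h w ∂μ}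
    have hsub : {x | ENNReal.ofReal s < 2⁻¹ * MA μ S f x} ⊆ ⋃ b ∈ T, ball b.1 b.2 := by
      intro x hx
      obtain ⟨b, hb, hxb, hlt⟩ := lt_MA.1 (MA_half μ S f s x hx)
      refine mem_biUnion (x := b) ⟨hb, ?_⟩ hxb
      rw [mul_comm, ← div_eq_mul_inv] at hlt
      exact (ENNReal.le_div_iff_mul_le (Or.inl (hz b hb)) (Or.inl (ht b hb))).1 hlt.le
    have hw := weak11 μ T (2 + (∫⁻ x, h x ∂μ) / ENNReal.ofReal s).toReal K (ENNReal.ofReal s) h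
      (fun b hb => h0 b hb.1) ?_ (fun b hb => hK b hb.1) (fun b hb => hb.2)
    · rw [← mul_div_assoc, ENNReal.le_div_iff_mul_le (Or.inl hs0) (Or.inl hst), mul_comm]
      refine le_trans ?_ hw
      gcongr
    · intro b hb
      have h2t : 2 + (∫⁻ x, h x ∂μ) / ENNReal.ofReal s ≠ ⊤ := by
        simp [ENNReal.div_eq_top, htop, hs]
      rw [← ENNReal.ofReal_le_iff_le_toReal h2t]
      refine (hR b hb.1).trans ?_
      gcongr
      rw [ENNReal.le_div_iff_mul_le (Or.inl hs0) (Or.inl hst), mul_comm]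
      exact hb.2.trans (setLIntegral_le_lintegral _ _)

end MAsec

/-- rational intervals -/
def S1 : Set (ℝ × ℝ) := range (fun c : ℚ × {r : ℚ // 0 < r} => ((c.1 : ℝ), (c.2.1 : ℝ)))

lemma S1_pos {b : ℝ × ℝ} (hb : b ∈ S1) : 0 < b.2 := by
  obtain ⟨c, rfl⟩ := hb
  exact Rat.cast_pos.2 c.2.2

lemma S1_strong (q : ℝ) (hq : 1 < q) : ∃ C : ℝ≥0∞, C ≠ ⊤ ∧ ∀ f : ℝ → ℝ≥0∞, Measurable f →
    ∫⁻ x, MA volume S1 f x ^ q ≤ C * ∫⁻ x, f x ^ q := by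
  refine ⟨_, ?_, fun f hf => MA_strong volume S1 5 (by norm_num) (fun b hb => S1_pos hb) 
    ?_ ?_ ?_ ?_ q hq f hf⟩
  · finiteness
  · intro b hb
    have := S1_pos hb
    rw [Real.volume_ball]
    refine le_trans ?_ le_add_self
    exact ENNReal.ofReal_le_ofReal (by linarith)
  · intro b hb
    rw [Real.volume_ball, Real.volume_closedBall]
    rw [show (5 : ℝ≥0∞) = ENNReal.ofReal 5 by simp, ← ENNReal.ofReal_mul (by norm_num)]
    exact ENNReal.ofReal_le_ofReal (by linarith)
  · intro b hb
    have := S1_pos hb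
    rw [Real.volume_ball]
    simpa using this
  · intro b hb
    rw [Real.volume_ball]
    exact ENNReal.ofReal_ne_top

lemma S1_avg (g : ℝ → ℝ≥0∞) (x R : ℝ) (hR : 0 < R) :
    ∫⁻ w in ball x R, g w ≤ ENNReal.ofReal (4 * R) * MA volume S1 g x := by
  obtain ⟨c, hc1, hc2⟩ := exists_rat_btwn (show x < x + R / 2 by linarith)
  obtain ⟨r, hr1, hr2⟩ := exists_rat_btwn (show 3 * R / 2 < 2 * R by linarith)
  have hr0 : (0 : ℝ) < r := by linarith
  have hb : ((c : ℝ), (r : ℝ)) ∈ S1 := ⟨(c, ⟨r, by exact_mod_cast hr0⟩), rfl⟩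
  have hd : dist x c < R / 2 := by
    rw [Real.dist_eq, abs_lt]; constructor <;> linarith
  have hx : x ∈ ball ((c : ℝ), (r : ℝ)).1 ((c : ℝ), (r : ℝ)).2 := by
    rw [mem_ball]; simp only; linarith
  have h := le_MA (μ := volume) (f := g) hb hx
  simp only [Real.volume_ball] at h
  rw [mul_comm, ← div_eq_mul_inv, ENNReal.div_le_iff (by simpa using hr0) ENNReal.ofReal_ne_top] at h
  calc ∫⁻ w in ball x R, g w ≤ ∫⁻ w in ball (c:ℝ) r, g w := 
        lintegral_mono_set (ball_subset_ball' (by linarith))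
    _ ≤ _ := h
    _ ≤ _ := by
      rw [mul_comm]
      exact mul_le_mul_left (ENNReal.ofReal_le_ofReal (by linarith)) _

lemma S1_meas (g : ℝ × ℝ → ℝ≥0∞) (hg : Measurable g) :
    Measurable (fun z : ℝ × ℝ => MA volume S1 (fun x' => g (x', z.2)) z.1) := by
  unfold MA
  refine Measurable.biSup _ (countable_range _) fun b hb => ?_
  have : (fun z : ℝ × ℝ => ⨆ (_ : z.1 ∈ ball b.1 b.2), (volume (ball b.1 b.2))⁻¹ * 
      ∫⁻ w in ball b.1 b.2, g (w, z.2)) = indicator (Prod.fst ⁻¹' ball b.1 b.2) (fun z => 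
        (volume (ball b.1 b.2))⁻¹ * ∫⁻ w in ball b.1 b.2, g (w, z.2)) := by
    ext z
    by_cases hz : z.1 ∈ ball b.1 b.2
    · simp only [hz, iSup_pos]
      rw [indicator_of_mem (by exact hz)]
    · simp only [hz, iSup_neg, not_false_iff]
      rw [indicator_of_notMem (by exact hz)]
      rfl
  rw [this]
  refine Measurable.indicator ?_ (measurableSet_ball.preimage measurable_fst)
  refine Measurable.const_mul ?_ _
  have : Measurable (fun y : ℝ => ∫⁻ w in ball b.1 b.2, g (w, y)) := hg.lintegral_prod_left'
  exact this.comp measurable_snd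

lemma tail_int (a k : ℝ) (ha : 0 < a) (hk : 1 < k) :
    ∫⁻ y in Ioi a, ENNReal.ofReal (y ^ (-k)) = ENNReal.ofReal (a ^ (1 - k) / (k - 1)) := by
  rw [← ofReal_integral_eq_lintegral_ofReal (integrableOn_Ioi_rpow_of_lt (by linarith) ha),
    integral_Ioi_rpow_of_lt (by linarith) ha]
  · congr 1
    rw [show -k + 1 = -(k - 1) by ring, neg_div_neg_eq]
    congr 2
    ring
  · filter_upwards [ae_restrict_mem measurableSet_Ioi] with s hs
    exact Real.rpow_nonneg (ha.trans hs).le _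

lemma young_core (t u q : ℝ) (ht : 0 ≤ t) (hu : 0 < u) (hq : 2 < q) :
    t * u ^ (1 / 2 : ℝ) ≤ t ^ (3 / 2 : ℝ) + t ^ q + 
      (if u < 1 then u ^ (3 / 2 : ℝ) else u ^ (q / (2 * (q - 1)))) := by
  have h1 : 0 ≤ t ^ (3 / 2 : ℝ) := Real.rpow_nonneg ht _
  have h2 : 0 ≤ t ^ q := Real.rpow_nonneg ht _
  have h3 : ∀ e : ℝ, 0 ≤ u ^ e := fun e => Real.rpow_nonneg hu.le _
  split_ifs with hu1
  · rcases le_or_gt t u with h | h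
    · have : t * u ^ (1 / 2 : ℝ) ≤ u * u ^ (1 / 2 : ℝ) := by gcongr
      have e : u * u ^ (1 / 2 : ℝ) = u ^ (3 / 2 : ℝ) := by
        rw [show (3 / 2 : ℝ) = 1 + 1 / 2 by norm_num, Real.rpow_add hu, Real.rpow_one]
      linarith
    · have ht : 0 < t := hu.trans h
      have : t * u ^ (1 / 2 : ℝ) ≤ t * t ^ (1 / 2 : ℝ) := by gcongr
      have e : t * t ^ (1 / 2 : ℝ) = t ^ (3 / 2 : ℝ) := by
        rw [show (3 / 2 : ℝ) = 1 + 1 / 2 by norm_num, Real.rpow_add ht, Real.rpow_one]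
      linarith [h3 (3 / 2)]
  · have hq1 : q - 1 ≠ 0 := by linarith
    rcases le_or_gt t (u ^ (1 / (2 * (q - 1)))) with h | h
    · have : t * u ^ (1 / 2 : ℝ) ≤ u ^ (1 / (2 * (q - 1))) * u ^ (1 / 2 : ℝ) := by gcongr
      rw [← Real.rpow_add hu] at this
      have e : 1 / (2 * (q - 1)) + 1 / 2 = q / (2 * (q - 1)) := by field_simp; ring
      rw [e] at this
      linarith
    · have ht : 0 < t := lt_of_le_of_lt (h3 _) h
      have e1 : u ^ (1 / 2 : ℝ) ≤ t ^ (q - 1) := by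
        calc u ^ (1 / 2 : ℝ) = (u ^ (1 / (2 * (q - 1)))) ^ (q - 1) := by
              rw [← Real.rpow_mul hu.le]; congr 1; field_simp
          _ ≤ _ := Real.rpow_le_rpow (h3 _) h.le (by linarith)
      have : t * u ^ (1 / 2 : ℝ) ≤ t * t ^ (q - 1) := by gcongr
      have e : t * t ^ (q - 1) = t ^ q := by
        nth_rw 1 [← Real.rpow_one t]
        rw [← Real.rpow_add ht]; congr 1; ring
      linarith [h3 (q / (2 * (q - 1)))]

lemma young_pt (S y q : ℝ) (hS : 0 < S) (hy : 0 < y) (hq : 2 < q) (F : ℝ≥0∞) :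
    ENNReal.ofReal (y ^ (-(3 / 2) : ℝ)) * F ≤ ENNReal.ofReal (S ^ (-(1 / 2) : ℝ)) * 
     ((ENNReal.ofReal (1 / y ^ 2) * F ^ (3 / 2 : ℝ) + ENNReal.ofReal (1 / y ^ 2) * F ^ q) +
      (ENNReal.ofReal (S ^ (3 / 2 : ℝ)) * 
        (if ENNReal.ofReal y < ENNReal.ofReal (1 / S) then ENNReal.ofReal (y ^ ((1 / 2 : ℝ) - 1)) else 0)
       + ENNReal.ofReal (S ^ (q / (2 * (q - 1)))) * 
        indicator (Ici (1 / S)) (fun y => ENNReal.ofReal (y ^ (-(2 - q / (2 * (q - 1)))))) y)) := by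
  have hSp : 0 < S ^ (-(1 / 2) : ℝ) := by positivity
  by_cases hF : F = ⊤
  · subst hF
    have : ENNReal.ofReal (1 / y ^ 2) * ⊤ ^ (3 / 2 : ℝ) = ⊤ := by
      rw [ENNReal.top_rpow_of_pos (by norm_num), ENNReal.mul_top]
      simp only [ne_eq, ENNReal.ofReal_eq_zero, not_le]; positivity
    have h2 : ENNReal.ofReal (S ^ (-(1 / 2) : ℝ)) * ⊤ = ⊤ := 
      ENNReal.mul_top (by simpa using hSp)
    rw [this, top_add, top_add, h2]
    exact le_top
  obtain ⟨t, ht, rfl⟩ : ∃ t : ℝ, 0 ≤ t ∧ F = ENNReal.ofReal t := 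
    ⟨F.toReal, ENNReal.toReal_nonneg, (ENNReal.ofReal_toReal hF).symm⟩
  set e := q / (2 * (q - 1)) with he
  have core := young_core t (y * S) q ht (by positivity) hq
  rw [← he] at core
  have hy2 : y ^ 2 = y ^ (2 : ℝ) := by norm_cast
  have hlhs : y ^ (-(3 / 2) : ℝ) * t = S ^ (-(1 / 2) : ℝ) * ((1 / y ^ 2) * (t * (y * S) ^ (1 / 2 : ℝ))) := by
    rw [Real.mul_rpow hy.le hS.le, one_div (y ^ 2), hy2, ← Real.rpow_neg hy.le]
    have a1 : S ^ (-(1 / 2) : ℝ) * S ^ (1 / 2 : ℝ) = 1 := by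
      rw [← Real.rpow_add hS]; norm_num
    have a2 : y ^ (-2 : ℝ) * y ^ (1 / 2 : ℝ) = y ^ (-(3 / 2) : ℝ) := by
      rw [← Real.rpow_add hy]; norm_num
    rw [← a2]
    linear_combination (-t * y ^ (-2 : ℝ) * y ^ (1 / 2 : ℝ)) * a1
  rw [← ENNReal.ofReal_mul (by positivity), hlhs, ENNReal.ofReal_mul hSp.le]
  gcongr
  rw [ENNReal.ofReal_rpow_of_nonneg ht (by norm_num), ENNReal.ofReal_rpow_of_nonneg ht (by linarith),
    ← ENNReal.ofReal_mul (by positivity), ← ENNReal.ofReal_mul (by positivity), 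
    ← ENNReal.ofReal_add (by positivity) (by positivity)]
  have hiff : y * S < 1 ↔ y < 1 / S := by rw [lt_div_iff₀ hS]
  have hSinv : 0 < 1 / S := by positivity
  simp only [ENNReal.ofReal_lt_ofReal_iff hSinv]
  by_cases hu : y * S < 1
  · rw [if_pos hu] at core
    have hu' := hiff.1 hu
    rw [if_pos hu', indicator_of_notMem (by simpa using hu'), mul_zero, add_zero,
      ← ENNReal.ofReal_mul (by positivity), ← ENNReal.ofReal_add (by positivity) (by positivity)]
    refine ENNReal.ofReal_le_ofReal ?_
    have : S ^ (3 / 2 : ℝ) * y ^ ((1 / 2 : ℝ) - 1) = 1 / y ^ 2 * (y * S) ^ (3 / 2 : ℝ) := by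
      rw [Real.mul_rpow hy.le hS.le, one_div (y ^ 2), hy2, ← Real.rpow_neg hy.le]
      have a2 : y ^ (-2 : ℝ) * y ^ (3 / 2 : ℝ) = y ^ ((1 / 2 : ℝ) - 1) := by
        rw [← Real.rpow_add hy]; norm_num
      rw [← a2]; ring
    rw [this, ← mul_add, ← mul_add]
    gcongr
  · rw [if_neg hu] at core
    have hu' := fun h => hu (hiff.2 h)
    rw [if_neg hu', indicator_of_mem (by simpa using hu'), mul_zero, zero_add,
      ← ENNReal.ofReal_mul (by positivity), ← ENNReal.ofReal_add (by positivity) (by positivity)]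
    refine ENNReal.ofReal_le_ofReal ?_
    have : S ^ e * y ^ (-(2 - e)) = 1 / y ^ 2 * (y * S) ^ e := by
      rw [Real.mul_rpow hy.le hS.le, one_div (y ^ 2), hy2, ← Real.rpow_neg hy.le]
      have a2 : y ^ (-2 : ℝ) * y ^ e = y ^ (-(2 - e)) := by
        rw [← Real.rpow_add hy]; congr 1; ring
      rw [← a2]; ring
    rw [this, ← mul_add, ← mul_add]
    gcongr

lemma young_int (q : ℝ) (hq : 2 < q) : ∃ C : ℝ≥0∞, C ≠ ⊤ ∧ ∀ F : ℝ → ℝ≥0∞, Measurable F →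
    (∫⁻ y in Ioi (0:ℝ), ENNReal.ofReal (y ^ (-(3 / 2) : ℝ)) * F y) ^ 2 ≤ C * 
      ((∫⁻ y in Ioi (0:ℝ), ENNReal.ofReal (1 / y ^ 2) * F y ^ (3 / 2 : ℝ)) +
       ∫⁻ y in Ioi (0:ℝ), ENNReal.ofReal (1 / y ^ 2) * F y ^ q) := by
  set e := q / (2 * (q - 1)) with he
  have he1 : e < 1 := by
    rw [he, div_lt_one (by linarith)]; linarith
  refine ⟨ENNReal.ofReal ((1 + (2 + 1 / (1 - e))) ^ 2), by finiteness, fun F hF => ?_⟩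
  set A := ∫⁻ y in Ioi (0:ℝ), ENNReal.ofReal (1 / y ^ 2) * F y ^ (3 / 2 : ℝ) with hA
  set B := ∫⁻ y in Ioi (0:ℝ), ENNReal.ofReal (1 / y ^ 2) * F y ^ q with hB
  have hpos : 0 < 1 / (1 - e) := by 
    have : 0 < 1 - e := by linarith
    positivity
  by_cases htop : A + B = ⊤
  · rw [htop, ENNReal.mul_top]
    · exact le_top
    · simp only [ne_eq, ENNReal.ofReal_eq_zero, not_le]; positivity
  by_cases hzero : A + B = 0
  · have hA0 : A = 0 := by simpa using (add_eq_zero.1 hzero).1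
    rw [hA, lintegral_eq_zero_iff (by fun_prop)] at hA0
    have : ∫⁻ y in Ioi (0:ℝ), ENNReal.ofReal (y ^ (-(3 / 2) : ℝ)) * F y = 0 := by
      rw [lintegral_eq_zero_iff (by fun_prop)]
      filter_upwards [hA0, ae_restrict_mem measurableSet_Ioi] with y hy hy0
      have hy0 : 0 < y := hy0
      simp only [Pi.zero_apply, mul_eq_zero, ENNReal.ofReal_eq_zero] at hy ⊢
      rcases hy with hy | hy
      · exact absurd hy (not_le.2 (by positivity))
      · right
        exact (ENNReal.rpow_eq_zero_iff_of_pos (by norm_num)).1 hy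
    rw [this]
    simp
  set S := (A + B).toReal with hS
  have hS0 : 0 < S := ENNReal.toReal_pos hzero htop
  have hSe : A + B = ENNReal.ofReal S := (ENNReal.ofReal_toReal htop).symm
  have hw1 : ∫⁻ y in Ioi (0:ℝ), ENNReal.ofReal (S ^ (3 / 2 : ℝ)) * 
        (if ENNReal.ofReal y < ENNReal.ofReal (1 / S) then ENNReal.ofReal (y ^ ((1 / 2 : ℝ) - 1)) else 0)
        = ENNReal.ofReal (2 * S) := by
    rw [lintegral_const_mul' _ _ (by simp), layer_aux _ (by norm_num), 
      ENNReal.ofReal_rpow_of_nonneg (by positivity) (by norm_num), 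
      ← ENNReal.ofReal_mul (by positivity), ← ENNReal.ofReal_mul (by positivity)]
    congr 1
    rw [one_div S, Real.inv_rpow hS0.le, ← Real.rpow_neg hS0.le]
    have : S ^ (3 / 2 : ℝ) * S ^ (-(1 / 2) : ℝ) = S := by
      rw [← Real.rpow_add hS0]; norm_num
    linear_combination 2 * this
  have hw2 : ∫⁻ y in Ioi (0:ℝ), ENNReal.ofReal (S ^ e) * 
        indicator (Ici (1 / S)) (fun y => ENNReal.ofReal (y ^ (-(2 - e)))) y
        ≤ ENNReal.ofReal (1 / (1 - e) * S) := by
    rw [lintegral_const_mul' _ _ (by simp)]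
    calc _ ≤ ENNReal.ofReal (S ^ e) * ∫⁻ y, 
        indicator (Ici (1 / S)) (fun y => ENNReal.ofReal (y ^ (-(2 - e)))) y := 
          mul_le_mul_right (setLIntegral_le_lintegral _ _) _
      _ = _ := by
        rw [lintegral_indicator measurableSet_Ici, setLIntegral_congr Ioi_ae_eq_Ici.symm, 
          tail_int _ _ (by positivity) (by linarith), ← ENNReal.ofReal_mul (by positivity)]
        congr 1
        rw [one_div S, Real.inv_rpow hS0.le, ← Real.rpow_neg hS0.le]
        have : S ^ e * S ^ (-(1 - (2 - e))) = S := by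
          rw [← Real.rpow_add hS0]
          have : e + -(1 - (2 - e)) = 1 := by ring
          rw [this, Real.rpow_one]
        rw [← mul_div_assoc, this]
        have : 2 - e - 1 = 1 - e := by ring
        rw [this]; ring
  have hG : ∫⁻ y in Ioi (0:ℝ), ENNReal.ofReal (y ^ (-(3 / 2) : ℝ)) * F y ≤ 
      ENNReal.ofReal (S ^ (-(1 / 2) : ℝ) * ((1 + (2 + 1 / (1 - e))) * S)) := by
    have mw : Measurable fun y : ℝ => (if ENNReal.ofReal y < ENNReal.ofReal (1 / S) then ENNReal.ofReal (y ^ ((1 / 2 : ℝ) - 1)) else 0) :=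
      Measurable.ite (measurableSet_lt (by fun_prop) (by fun_prop)) (by fun_prop) measurable_const
    calc _ ≤ _ := setLIntegral_mono' measurableSet_Ioi fun y hy => young_pt S y q hS0 hy hq (F y)
      _ ≤ _ := by
        rw [lintegral_const_mul' _ _ (by simp), lintegral_add_left (by fun_prop), 
          lintegral_add_left (by fun_prop), lintegral_add_left (by fun_prop), ← hA, ← hB, hSe, hw1]
        rw [ENNReal.ofReal_mul (p := S ^ (-(1 / 2) : ℝ)) (by positivity)]
        refine mul_le_mul_right ?_ _
        calc _ ≤ ENNReal.ofReal S + (ENNReal.ofReal (2 * S) + ENNReal.ofReal (1 / (1 - e) * S)) := by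
              gcongr
          _ = _ := by
            rw [← ENNReal.ofReal_add (by positivity) (by positivity), ← ENNReal.ofReal_add (by positivity) (by positivity)]
            congr 1; ring
  calc _ ≤ _ := pow_le_pow_left₀ (by positivity) hG 2
    _ = _ := by
      rw [hSe, ← ENNReal.ofReal_mul (by positivity), ← ENNReal.ofReal_pow (by positivity)]
      congr 1
      have : (S ^ (-(1 / 2) : ℝ)) ^ 2 = S⁻¹ := by
        rw [← Real.rpow_natCast, ← Real.rpow_mul hS0.le, ← Real.rpow_neg_one]; norm_num
      rw [mul_pow, this]
      field_simp

lemma me_coe : MeasurableEmbedding (fun z : UpperHalfPlane => (z : ℂ)) :=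
  UpperHalfPlane.isOpenEmbedding_coe.measurableEmbedding

lemma meas_re : Measurable (fun z : UpperHalfPlane => z.re) :=
  Complex.measurable_re.comp me_coe.measurable

lemma meas_im : Measurable (fun z : UpperHalfPlane => z.im) :=
  Complex.measurable_im.comp me_coe.measurable

lemma me_prod : MeasurableEmbedding (fun z : UpperHalfPlane => (z.re, z.im)) :=
  Complex.measurableEquivRealProd.measurableEmbedding.comp me_coe

lemma hyp_lintegral (g : ℝ × ℝ → ℝ≥0∞) (hg : Measurable g) :
    ∫⁻ z, g (z.re, z.im) ∂hypMeasure = 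
      ∫⁻ y in Ioi (0:ℝ), ENNReal.ofReal (1 / y ^ 2) * ∫⁻ x, g (x, y) := by
  unfold hypMeasure
  have m1 := meas_im
  have m2 := meas_re
  rw [lintegral_withDensity_eq_lintegral_mul _ (by fun_prop) (by fun_prop)]
  set H : ℝ × ℝ → ℝ≥0∞ := indicator {p | 0 < p.2} (fun p => ENNReal.ofReal (1 / p.2 ^ 2) * g p) with hH
  have mset : MeasurableSet {p : ℝ × ℝ | 0 < p.2} := measurableSet_lt measurable_const measurable_snd
  have mH : Measurable H := Measurable.indicator (by fun_prop) mset
  have e1 : ∀ z : UpperHalfPlane, ((fun z : UpperHalfPlane => ENNReal.ofReal (1 / z.im ^ 2)) * 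
      fun z : UpperHalfPlane => g (z.re, z.im)) z = 
      (fun z : ℂ => H (Complex.measurableEquivRealProd z)) (z : ℂ) := by
    intro z
    have : ((z:ℂ).re, (z:ℂ).im) ∈ {p : ℝ × ℝ | 0 < p.2} := z.im_pos
    simp only [hH, Complex.measurableEquivRealProd_apply, Pi.mul_apply]
    rw [indicator_of_mem this]
    rfl
  rw [lintegral_congr e1]
  refine (me_coe.lintegral_map (μ := Measure.comap (fun z : UpperHalfPlane => (z : ℂ)) volume)
    (fun z : ℂ => H (Complex.measurableEquivRealProd z))).symm.trans ?_
  rw [me_coe.map_comap]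
  have e2 : ∫⁻ z in range (fun z : UpperHalfPlane => (z : ℂ)), H (Complex.measurableEquivRealProd z)
     = ∫⁻ z : ℂ, H (Complex.measurableEquivRealProd z) := by
    rw [← lintegral_indicator me_coe.measurableSet_range]
    congr 1
    ext z
    by_cases hz : z ∈ range (fun z : UpperHalfPlane => (z : ℂ))
    · rw [indicator_of_mem hz]
    · rw [indicator_of_notMem hz]
      have : (z.re, z.im) ∉ {p : ℝ × ℝ | 0 < p.2} := fun h => hz ⟨⟨z, h⟩, rfl⟩
      simp only [hH, Complex.measurableEquivRealProd_apply]
      rw [indicator_of_notMem this]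
  rw [e2, Complex.volume_preserving_equiv_real_prod.lintegral_comp mH, Measure.volume_eq_prod,
    lintegral_prod_symm' _ mH, ← lintegral_indicator measurableSet_Ioi]
  congr 1
  ext y
  by_cases hy : 0 < y
  · rw [indicator_of_mem (by exact hy), ← lintegral_const_mul _ (by fun_prop)]
    congr 1
    ext x
    simp [hH, hy]
  · rw [indicator_of_notMem (by exact hy)]
    simp [hH, hy]

lemma hyp_apply (A : Set UpperHalfPlane) (hA : MeasurableSet A) :
    hypMeasure A = ∫⁻ z in A, ENNReal.ofReal (1 / z.im ^ 2) 
      ∂(Measure.comap (fun z : UpperHalfPlane => (z : ℂ)) volume) := by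
  unfold hypMeasure
  rw [withDensity_apply _ hA]

lemma hyp_closedBall_le (c : UpperHalfPlane) (r : ℝ) (hr : 0 ≤ r) :
    hypMeasure (closedBall c r) ≤ ENNReal.ofReal (Real.exp r ^ 2 * Real.sinh r ^ 2) * NNReal.pi := by
  have hc := c.im_pos
  have hs : 0 ≤ Real.sinh r := Real.sinh_nonneg_iff.2 hr
  rw [hyp_apply _ measurableSet_closedBall]
  calc _ ≤ ∫⁻ z in closedBall c r, ENNReal.ofReal ((Real.exp r / c.im) ^ 2) 
      ∂(Measure.comap (fun z : UpperHalfPlane => (z : ℂ)) volume) := by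
        refine setLIntegral_mono' measurableSet_closedBall fun z hz => ?_
        refine ENNReal.ofReal_le_ofReal ?_
        have h1 := UpperHalfPlane.im_le_im_mul_exp_dist c z
        have h2 : Real.exp (dist c z) ≤ Real.exp r := Real.exp_le_exp.2 (by rw [dist_comm]; exact hz)
        have hz := z.im_pos
        have h3 : c.im ≤ z.im * Real.exp r := h1.trans (by gcongr)
        rw [show 1 / z.im ^ 2 = (1 / z.im) ^ 2 by field_simp]
        refine pow_le_pow_left₀ (by positivity) ?_ 2
        rw [div_le_div_iff₀ hz hc]
        linarith
    _ = _ := by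
        rw [setLIntegral_const, me_coe.comap_apply, 
          UpperHalfPlane.image_coe_closedBall, Complex.volume_closedBall, ← mul_assoc,
          ← ENNReal.ofReal_pow (by positivity), ← ENNReal.ofReal_mul (by positivity)]
        congr 2
        field_simp

lemma hyp_ball_ge (c : UpperHalfPlane) (r : ℝ) (hr : 0 ≤ r) :
    ENNReal.ofReal (Real.exp (-r) ^ 2 * Real.sinh r ^ 2) * NNReal.pi ≤ hypMeasure (ball c r) := by
  have hc := c.im_pos
  have hs : 0 ≤ Real.sinh r := Real.sinh_nonneg_iff.2 hr
  rw [hyp_apply _ measurableSet_ball]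
  calc _ = ∫⁻ z in ball c r, ENNReal.ofReal ((Real.exp (-r) / c.im) ^ 2) 
      ∂(Measure.comap (fun z : UpperHalfPlane => (z : ℂ)) volume) := by
        rw [setLIntegral_const, me_coe.comap_apply, 
          UpperHalfPlane.image_coe_ball, Complex.volume_ball, ← mul_assoc,
          ← ENNReal.ofReal_pow (by positivity), ← ENNReal.ofReal_mul (by positivity)]
        congr 2
        field_simp
    _ ≤ _ := by
        refine setLIntegral_mono' measurableSet_ball fun z hz => ?_
        refine ENNReal.ofReal_le_ofReal ?_
        have h1 := UpperHalfPlane.im_le_im_mul_exp_dist z c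
        have h2 : Real.exp (dist z c) ≤ Real.exp r := Real.exp_le_exp.2 (le_of_lt hz)
        have hz := z.im_pos
        have h3 : z.im ≤ c.im * Real.exp r := h1.trans (by gcongr)
        rw [show 1 / z.im ^ 2 = (1 / z.im) ^ 2 by field_simp]
        refine pow_le_pow_left₀ (by positivity) ?_ 2
        rw [Real.exp_neg, div_le_div_iff₀ hc hz, inv_mul_le_iff₀ (Real.exp_pos _)]
        linarith

instance : SFinite hypMeasure := by
  have : SFinite (Measure.comap (fun z : UpperHalfPlane => (z : ℂ)) volume) := by
    have : IsLocallyFiniteMeasure (Measure.comap (fun z : UpperHalfPlane => (z : ℂ)) volume) := by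
      refine ⟨fun z => ⟨closedBall z 1, closedBall_mem_nhds z one_pos, ?_⟩⟩
      rw [me_coe.comap_apply, UpperHalfPlane.image_coe_closedBall]
      exact measure_closedBall_lt_top
    infer_instance
  unfold hypMeasure
  infer_instance

lemma hyp_closedBall_lt_top (c : UpperHalfPlane) (r : ℝ) (hr : 0 ≤ r) :
    hypMeasure (closedBall c r) < ⊤ := 
  (hyp_closedBall_le c r hr).trans_lt (by finiteness)

lemma hyp_ball_ne_zero (c : UpperHalfPlane) (r : ℝ) (hr : 0 < r) : hypMeasure (ball c r) ≠ 0 := by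
  refine (lt_of_lt_of_le ?_ (hyp_ball_ge c r hr.le)).ne'
  have : 0 < Real.sinh r := Real.sinh_pos_iff.2 hr
  refine ENNReal.mul_pos ?_ ?_
  · simp only [ne_eq, ENNReal.ofReal_eq_zero, not_le]; positivity
  · exact_mod_cast NNReal.pi_ne_zero

/-- small balls -/
def SS : Set (UpperHalfPlane × ℝ) := {b | 0 < b.2 ∧ b.2 ≤ 2}

/-- large balls -/
def SL : Set (UpperHalfPlane × ℝ) := {b | 2 < b.2}

lemma sinh_five (r : ℝ) (h0 : 0 ≤ r) (h2 : r ≤ 2) : 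
    Real.sinh (5 * r) ≤ (8 * (Real.cosh 2 * Real.cosh 4 * Real.cosh 8)) * Real.sinh r := by
  have hs : 0 ≤ Real.sinh r := Real.sinh_nonneg_iff.2 h0
  have e : Real.sinh (8 * r) = 8 * (Real.cosh r * Real.cosh (2 * r) * Real.cosh (4 * r)) * Real.sinh r := by
    rw [show 8 * r = 2 * (2 * (2 * r)) by ring, Real.sinh_two_mul, Real.sinh_two_mul, Real.sinh_two_mul,
      show 2 * (2 * r) = 4 * r by ring]
    ring
  have hcosh : ∀ a b : ℝ, 0 ≤ a → a ≤ b → Real.cosh a ≤ Real.cosh b := by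
    intro a b ha hab
    rw [Real.cosh_le_cosh, abs_of_nonneg ha, abs_of_nonneg (ha.trans hab)]
    exact hab
  calc Real.sinh (5 * r) ≤ Real.sinh (8 * r) := Real.sinh_le_sinh.2 (by linarith)
    _ = _ := e
    _ ≤ _ := by
      have p1 := Real.cosh_pos r
      have p2 := Real.cosh_pos (2 * r)
      have p3 := Real.cosh_pos (4 * r)
      gcongr 
      · exact hcosh _ _ h0 h2
      · exact hcosh _ _ (by linarith) (by linarith)
      · exact hcosh _ _ (by linarith) (by linarith)

lemma SS_strong (q : ℝ) (hq : 1 < q) : ∃ C : ℝ≥0∞, C ≠ ⊤ ∧ ∀ f : UpperHalfPlane → ℝ≥0∞, Measurable f →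
    ∫⁻ x, MA hypMeasure SS f x ^ q ∂hypMeasure ≤ C * ∫⁻ x, f x ^ q ∂hypMeasure := by
  set A := 8 * (Real.cosh 2 * Real.cosh 4 * Real.cosh 8) with hA
  have hA0 : 0 < A := by
    have := Real.cosh_pos 2
    have := Real.cosh_pos 4
    have := Real.cosh_pos 8
    positivity
  set K : ℝ≥0∞ := 1 + ENNReal.ofReal (Real.exp 10 ^ 2 * Real.exp 2 ^ 2 * A ^ 2) with hK
  have hKt : K ≠ ⊤ := by finiteness
  refine ⟨_, ?_, fun f hf => MA_strong hypMeasure SS K le_self_add (fun b hb => hb.1)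
    ?_ ?_ ?_ ?_ q hq f hf⟩
  · finiteness
  · intro b hb
    refine le_trans ?_ le_self_add
    rw [show (2:ℝ≥0∞) = ENNReal.ofReal 2 by simp]
    exact ENNReal.ofReal_le_ofReal hb.2
  · rintro ⟨c, r⟩ ⟨h0, h2⟩
    simp only at h0 h2 ⊢
    have hs : 0 ≤ Real.sinh r := Real.sinh_nonneg_iff.2 h0.le
    have hs5 : 0 ≤ Real.sinh (5 * r) := Real.sinh_nonneg_iff.2 (by linarith)
    calc hypMeasure (closedBall c (5 * r)) 
        ≤ ENNReal.ofReal (Real.exp (5 * r) ^ 2 * Real.sinh (5 * r) ^ 2) * NNReal.pi :=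
          hyp_closedBall_le c _ (by linarith)
      _ ≤ ENNReal.ofReal ((Real.exp 10 ^ 2 * Real.exp 2 ^ 2 * A ^ 2) * (Real.exp (-r) ^ 2 * Real.sinh r ^ 2)) * NNReal.pi := by
          refine mul_le_mul_left (ENNReal.ofReal_le_ofReal ?_) _
          calc Real.exp (5 * r) ^ 2 * Real.sinh (5 * r) ^ 2 
              ≤ Real.exp 10 ^ 2 * (A * Real.sinh r) ^ 2 := by
                gcongr
                · linarith
                · exact sinh_five r h0.le h2
            _ = Real.exp 10 ^ 2 * 1 ^ 2 * (A * Real.sinh r) ^ 2 := by ring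
            _ ≤ Real.exp 10 ^ 2 * (Real.exp 2 * Real.exp (-r)) ^ 2 * (A * Real.sinh r) ^ 2 := by
                gcongr
                rw [← Real.exp_add]
                exact Real.one_le_exp (by linarith)
            _ = _ := by ring
      _ = ENNReal.ofReal (Real.exp 10 ^ 2 * Real.exp 2 ^ 2 * A ^ 2) * 
           (ENNReal.ofReal (Real.exp (-r) ^ 2 * Real.sinh r ^ 2) * NNReal.pi) := by
          rw [ENNReal.ofReal_mul (by positivity), mul_assoc]
      _ ≤ _ := by
          gcongr
          · exact le_add_self
          · exact hyp_ball_ge c r h0.le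
  · intro b hb
    exact hyp_ball_ne_zero _ _ hb.1
  · intro b hb
    exact ((measure_mono ball_subset_closedBall).trans_lt (hyp_closedBall_lt_top b.1 b.2 hb.1.le)).ne

lemma hyp_large (c : UpperHalfPlane) (r : ℝ) (hr : 2 < r) :
    ENNReal.ofReal (Real.exp r / 9) ≤ hypMeasure (ball c r) := by
  have hY := c.im_pos
  set Y := c.im with hYd
  set Q : Set (ℝ × ℝ) := ball c.re (Y / 2) ×ˢ Ioo (2 * Y * Real.exp (-r)) (3 * Y * Real.exp (-r)) with hQ
  have mQ : MeasurableSet Q := measurableSet_ball.prod measurableSet_Ioo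
  have hmul : Real.exp (-r) * Real.exp r = 1 := by rw [← Real.exp_add]; simp
  have hE := Real.exp_pos (-r)
  have hE2 : Real.exp (-r) < 1 / 7 := by
    have h1 : Real.exp (-r) ≤ Real.exp (-2) := Real.exp_le_exp.2 (by linarith)
    have h2 : Real.exp (-2) * (Real.exp 1 * Real.exp 1) = 1 := by
      rw [← Real.exp_add, ← Real.exp_add]; norm_num
    have h3 := Real.exp_one_gt_d9
    have h4 := Real.exp_pos (-2)
    have h5 : 7 < Real.exp 1 * Real.exp 1 := by nlinarith
    nlinarith
  have hsub : ∀ z : UpperHalfPlane, (z.re, z.im) ∈ Q → z ∈ ball c r := by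
    rintro z ⟨hz1, hz2, hz3⟩
    simp only [mem_ball, Real.dist_eq] at hz1 hz2 hz3
    have hz := z.im_pos
    rw [mem_ball, ← abs_of_nonneg (dist_nonneg (x := z) (y := c)), ← abs_of_pos (show 0 < r by linarith),
      ← Real.cosh_lt_cosh, UpperHalfPlane.cosh_dist']
    rw [div_lt_iff₀ (by positivity)]
    have h1 : (z.re - c.re) ^ 2 ≤ (Y / 2) ^ 2 := by
      rw [← sq_abs]
      gcongr
    have h2 : Real.exp r ≤ 2 * Real.cosh r := by
      rw [Real.cosh_eq]; linarith
    have h3 : 2 * Y < z.im * Real.exp r := by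
      calc 2 * Y = 2 * Y * Real.exp (-r) * Real.exp r := by rw [mul_assoc _ (Real.exp (-r)), hmul, mul_one]
        _ < _ := by gcongr
    have h4 : z.im < 3 / 7 * Y := by nlinarith
    have h5 : z.im ^ 2 ≤ (3 / 7 * Y) ^ 2 := by gcongr
    have h6 : 2 * Y * Y < Real.cosh r * (2 * z.im * Y) := by
      have : z.im * Real.exp r ≤ z.im * (2 * Real.cosh r) := by gcongr
      nlinarith
    rw [← hYd]
    nlinarith
  have hm := meas_re
  have hm' := meas_im
  calc ENNReal.ofReal (Real.exp r / 9) 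
      ≤ ∫⁻ y in Ioo (2 * Y * Real.exp (-r)) (3 * Y * Real.exp (-r)), 
          ENNReal.ofReal (1 / (3 * Y * Real.exp (-r)) ^ 2) * ENNReal.ofReal Y := by
        rw [setLIntegral_const, Real.volume_Ioo, ← ENNReal.ofReal_mul (by positivity), 
          ← ENNReal.ofReal_mul (by positivity)]
        refine ENNReal.ofReal_le_ofReal (le_of_eq ?_)
        have : Real.exp r = 1 / Real.exp (-r) := by field_simp; linarith
        rw [this]
        field_simp
        norm_num
    _ ≤ ∫⁻ y in Ioo (2 * Y * Real.exp (-r)) (3 * Y * Real.exp (-r)), 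
          ENNReal.ofReal (1 / y ^ 2) * ∫⁻ x, indicator Q 1 (x, y) := by
        refine setLIntegral_mono' measurableSet_Ioo fun y hy => ?_
        have hy0 : 0 < y := lt_trans (by positivity) hy.1
        have : ∫⁻ x, indicator Q (1 : ℝ × ℝ → ℝ≥0∞) (x, y) = ENNReal.ofReal Y := by
          have : ∀ x, indicator Q (1 : ℝ × ℝ → ℝ≥0∞) (x, y) = indicator (ball c.re (Y / 2)) 1 x := by
            intro x
            have : (x, y) ∈ Q ↔ x ∈ ball c.re (Y / 2) := by
              simp only [hQ, mem_prod, hy, and_true]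
            by_cases hx : x ∈ ball c.re (Y / 2)
            · rw [indicator_of_mem hx, indicator_of_mem (this.2 hx)]; rfl
            · rw [indicator_of_notMem hx, indicator_of_notMem (fun h => hx (this.1 h))]
          rw [lintegral_congr this, lintegral_indicator_one measurableSet_ball, Real.volume_ball]
          congr 1; ring
        rw [this]
        gcongr
        exact hy.2.le
    _ ≤ ∫⁻ y in Ioi 0, ENNReal.ofReal (1 / y ^ 2) * ∫⁻ x, indicator Q 1 (x, y) := 
        lintegral_mono_set fun y hy => lt_trans (by positivity) hy.1
    _ = ∫⁻ z, indicator Q 1 (z.re, z.im) ∂hypMeasure := 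
        (hyp_lintegral _ (measurable_one.indicator mQ)).symm
    _ ≤ ∫⁻ z, indicator (ball c r) 1 z ∂hypMeasure := by
        refine lintegral_mono fun z => ?_
        by_cases hz : (z.re, z.im) ∈ Q
        · rw [indicator_of_mem hz, indicator_of_mem (hsub z hz)]; rfl
        · rw [indicator_of_notMem hz]; exact zero_le
    _ = _ := lintegral_indicator_one measurableSet_ball

lemma large_pt (f : UpperHalfPlane → ℝ≥0∞) (g : ℝ × ℝ → ℝ≥0∞) (hg : Measurable g)
    (hfg : ∀ z : UpperHalfPlane, g (z.re, z.im) = f z) (z : UpperHalfPlane) :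
    MA hypMeasure SL f z ≤ ENNReal.ofReal (36 * √z.im) * 
      ∫⁻ y in Ioi (0:ℝ), ENNReal.ofReal (y ^ (-(3/2) : ℝ)) * MA volume S1 (fun x' => g (x', y)) z.re := by
  unfold MA
  refine iSup₂_le fun b hb => iSup_le fun hz => ?_
  obtain ⟨c, r⟩ := b
  simp only [SL, mem_ofPred_eq] at hb hz ⊢
  have hzi := z.im_pos
  set Q : Set (ℝ × ℝ) := {w | w.1 ∈ ball z.re (Real.exp r * √(z.im * w.2))} with hQ
  have mQ : MeasurableSet Q := by
    have : Q = {w | dist w.1 z.re < Real.exp r * √(z.im * w.2)} := rfl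
    rw [this]
    exact measurableSet_lt (by fun_prop) (by fun_prop)
  have hsub : ∀ w ∈ ball c r, (w.re, w.im) ∈ Q := by
    intro w hw
    have hwi := w.im_pos
    have hd : dist z w < 2 * r := by
      have := dist_triangle z c w
      rw [mem_ball] at hz hw
      rw [dist_comm c w] at this
      linarith
    have h1 := UpperHalfPlane.sinh_half_dist z w
    have h2 : Real.sinh (dist z w / 2) < Real.exp r / 2 := by
      refine (Real.sinh_lt_sinh.2 (show dist z w / 2 < r by linarith)).trans ?_
      rw [Real.sinh_eq]
      have := Real.exp_pos (-r)
      linarith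
    have hsq : 0 < √(z.im * w.im) := Real.sqrt_pos.2 (by positivity)
    rw [h1, div_lt_iff₀ (by positivity)] at h2
    have h3 : |w.re - z.re| ≤ dist (z:ℂ) (w:ℂ) := by
      rw [dist_comm, Complex.dist_eq]
      exact Complex.abs_re_le_norm ((w:ℂ) - z)
    show dist w.re z.re < _
    rw [Real.dist_eq]
    refine h3.trans_lt (h2.trans_le (le_of_eq ?_))
    ring
  have mk : Measurable (indicator Q g) := hg.indicator mQ
  have hfm : Measurable f := by
    have : f = fun z : UpperHalfPlane => g (z.re, z.im) := funext fun z => (hfg z).symm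
    rw [this]; exact hg.comp (meas_re.prodMk meas_im)
  have hinv : (hypMeasure (ball c r))⁻¹ ≤ ENNReal.ofReal (9 * Real.exp (-r)) := by
    have h := ENNReal.inv_le_inv.2 (hyp_large c r hb)
    refine h.trans (le_of_eq ?_)
    rw [← ENNReal.ofReal_inv_of_pos (by positivity), Real.exp_neg]
    congr 1
    field_simp
  have hint : ∫⁻ w in ball c r, f w ∂hypMeasure ≤ ∫⁻ y in Ioi (0:ℝ), 
      ENNReal.ofReal (4 * Real.exp r * √z.im) * (ENNReal.ofReal (y ^ (-(3/2) : ℝ)) * 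
        MA volume S1 (fun x' => g (x', y)) z.re) := by
    calc ∫⁻ w in ball c r, f w ∂hypMeasure ≤ ∫⁻ w, indicator Q g (w.re, w.im) ∂hypMeasure := by
          rw [← lintegral_indicator measurableSet_ball]
          refine lintegral_mono fun w => ?_
          by_cases hw : w ∈ ball c r
          · rw [indicator_of_mem hw, indicator_of_mem (hsub w hw), hfg]
          · rw [indicator_of_notMem hw]; exact zero_le
      _ = ∫⁻ y in Ioi (0:ℝ), ENNReal.ofReal (1 / y ^ 2) * ∫⁻ x, indicator Q g (x, y) := 
          hyp_lintegral _ mk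
      _ ≤ _ := by
          refine setLIntegral_mono' measurableSet_Ioi fun y hy => ?_
          have hy : 0 < y := hy
          have e : ∫⁻ x, indicator Q g (x, y) = 
              ∫⁻ x in ball z.re (Real.exp r * √(z.im * y)), g (x, y) := by
            rw [← lintegral_indicator measurableSet_ball]
            rfl
          have hR : 0 < Real.exp r * √(z.im * y) := 
            mul_pos (Real.exp_pos _) (Real.sqrt_pos.2 (by positivity))
          rw [e]
          refine (mul_le_mul_right (S1_avg (fun x' => g (x', y)) z.re _ hR) _).trans (le_of_eq ?_)
          rw [← mul_assoc (ENNReal.ofReal (1 / y ^ 2)), 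
            ← mul_assoc (ENNReal.ofReal (4 * Real.exp r * √z.im)), ← ENNReal.ofReal_mul (by positivity), 
            ← ENNReal.ofReal_mul (by positivity)]
          congr 2
          rw [Real.sqrt_mul hzi.le, show (-(3/2) : ℝ) = 1 / 2 - 2 by norm_num, Real.rpow_sub hy,
            Real.sqrt_eq_rpow y, Real.rpow_two]
          field_simp
  calc _ ≤ ENNReal.ofReal (9 * Real.exp (-r)) * _ := mul_le_mul' hinv hint
    _ = _ := by
      rw [lintegral_const_mul' _ _ ENNReal.ofReal_ne_top, ← mul_assoc, ← ENNReal.ofReal_mul (by positivity)]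
      congr 2
      rw [Real.exp_neg]
      have := Real.exp_pos r
      field_simp
      norm_num

lemma fiber_le (G : ℝ≥0∞) (s : ℝ) (hs : 0 < s) :
    ∫⁻ y in Ioi (0:ℝ), ENNReal.ofReal (1 / y ^ 2) * 
      (if ENNReal.ofReal s < ENNReal.ofReal (36 * √y) * G then 1 else 0) ≤ 
      ENNReal.ofReal (36 ^ 2) * (G / ENNReal.ofReal s) ^ 2 := by
  rcases eq_or_ne G ⊤ with rfl | hG
  · rw [ENNReal.top_div_of_ne_top ENNReal.ofReal_ne_top]
    simp [ENNReal.mul_top]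
  lift G to ℝ≥0 using hG
  rcases eq_or_ne G 0 with rfl | h0
  · simp
  have hG : 0 < (G:ℝ) := by positivity
  set a : ℝ := (s / (36 * G)) ^ 2 with ha
  have ha0 : 0 < a := by positivity
  calc _ ≤ ∫⁻ y in Ioi (0:ℝ), indicator (Ioi a) (fun y => ENNReal.ofReal (y ^ (-2:ℝ))) y := by
        refine setLIntegral_mono' measurableSet_Ioi fun y hy => ?_
        have hy : 0 < y := hy
        split_ifs with h
        · have hmem : y ∈ Ioi a := by
            rw [← ENNReal.ofReal_coe_nnreal (p := G), ← ENNReal.ofReal_mul (by positivity), 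
              ENNReal.ofReal_lt_ofReal_iff_of_nonneg hs.le] at h
            have : s / (36 * G) < √y := by
              rw [div_lt_iff₀ (by positivity)]; linarith
            exact (Real.lt_sqrt (by positivity)).1 this
          rw [indicator_of_mem hmem, mul_one, Real.rpow_neg hy.le, Real.rpow_two, one_div]
        · simp
    _ ≤ ∫⁻ y, indicator (Ioi a) (fun y => ENNReal.ofReal (y ^ (-2:ℝ))) y := setLIntegral_le_lintegral _ _
    _ = ENNReal.ofReal (a ^ (1 - 2 : ℝ) / (2 - 1)) := by
        rw [lintegral_indicator measurableSet_Ioi]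
        exact tail_int a 2 ha0 (by norm_num)
    _ = _ := by
        rw [← ENNReal.ofReal_coe_nnreal (p := G), ← ENNReal.ofReal_div_of_pos hs, 
          ← ENNReal.ofReal_pow (by positivity), ← ENNReal.ofReal_mul (by positivity)]
        congr 1
        rw [show (1 - 2 : ℝ) = -1 by norm_num, Real.rpow_neg_one, ha]
        field_simp
        norm_num

lemma swap_hyp (k : ℝ × ℝ → ℝ≥0∞) (hk : Measurable k) :
    ∫⁻ x, ∫⁻ y in Ioi (0:ℝ), ENNReal.ofReal (1 / y ^ 2) * k (x, y) = 
      ∫⁻ y in Ioi (0:ℝ), ENNReal.ofReal (1 / y ^ 2) * ∫⁻ x, k (x, y) := by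
  rw [lintegral_lintegral_swap]
  · congr 1
    ext y
    rw [lintegral_const_mul' _ _ ENNReal.ofReal_ne_top]
  · refine Measurable.aemeasurable ?_
    unfold Function.uncurry
    fun_prop

lemma S1_scaled (a : ℝ) (ha : 1 < a) (C : ℝ≥0∞) 
    (hC : ∀ f : ℝ → ℝ≥0∞, Measurable f → ∫⁻ x, MA volume S1 f x ^ a ≤ C * ∫⁻ x, f x ^ a)
    (s : ℝ) (hs : 0 < s)
    (f : UpperHalfPlane → ℝ≥0∞) (g : ℝ × ℝ → ℝ≥0∞) (hg : Measurable g)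
    (hfg : ∀ z : UpperHalfPlane, g (z.re, z.im) = f z) :
    ∫⁻ x, ∫⁻ y in Ioi (0:ℝ), ENNReal.ofReal (1 / y ^ 2) * 
      (MA volume S1 (fun x' => g (x', y)) x / ENNReal.ofReal s) ^ a ≤ 
      C * ∫⁻ z, (f z / ENNReal.ofReal s) ^ a ∂hypMeasure := by
  have hM := S1_meas g hg
  have hs0 : ENNReal.ofReal s ≠ 0 := by simpa using hs
  have hst : ENNReal.ofReal s ≠ ⊤ := ENNReal.ofReal_ne_top
  have hinv : ((ENNReal.ofReal s)⁻¹) ^ a ≠ ⊤ := 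
    ENNReal.rpow_ne_top_of_nonneg (by linarith) (ENNReal.inv_ne_top.2 hs0)
  have e := swap_hyp (fun z => (MA volume S1 (fun x' => g (x', z.2)) z.1 / ENNReal.ofReal s) ^ a)
    ((hM.div_const _).pow_const _)
  simp only at e
  rw [e]
  have e2 := hyp_lintegral (fun z => (g z / ENNReal.ofReal s) ^ a) ((hg.div_const _).pow_const _)
  simp only [hfg] at e2
  rw [e2, ← lintegral_const_mul _ (by
    refine Measurable.mul (by fun_prop) ?_
    exact Measurable.lintegral_prod_left' (f := fun z : ℝ × ℝ => (g z / ENNReal.ofReal s) ^ a)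
      ((hg.div_const _).pow_const _))]
  refine lintegral_mono fun y => ?_
  rw [mul_left_comm]
  refine mul_le_mul_right ?_ _
  simp_rw [div_eq_mul_inv, ENNReal.mul_rpow_of_nonneg _ _ (show 0 ≤ a by linarith)]
  rw [lintegral_mul_const' _ _ hinv, lintegral_mul_const' _ _ hinv, ← mul_assoc]
  exact mul_le_mul_left (hC _ (by fun_prop)) _

lemma large_weak (q : ℝ) (hq : 2 < q) : ∃ K : ℝ≥0∞, K ≠ ⊤ ∧ ∀ f : UpperHalfPlane → ℝ≥0∞, Measurable f →
    ∀ s : ℝ, 0 < s → hypMeasure {z | ENNReal.ofReal s < MA hypMeasure SL f z} ≤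
      K * (∫⁻ z, (f z / ENNReal.ofReal s) ^ (3/2 : ℝ) ∂hypMeasure + 
        ∫⁻ z, (f z / ENNReal.ofReal s) ^ q ∂hypMeasure) := by
  obtain ⟨C0, hC0, H0⟩ := young_int q hq
  obtain ⟨C1, hC1, H1⟩ := S1_strong (3/2) (by norm_num)
  obtain ⟨C2, hC2, H2⟩ := S1_strong q (by linarith)
  refine ⟨ENNReal.ofReal (36 ^ 2) * C0 * (C1 + C2), by finiteness, fun f hf s hs => ?_⟩
  have hs0 : ENNReal.ofReal s ≠ 0 := by simpa using hs
  have hst : ENNReal.ofReal s ≠ ⊤ := ENNReal.ofReal_ne_top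
  set g : ℝ × ℝ → ℝ≥0∞ := Function.extend (fun z : UpperHalfPlane => (z.re, z.im)) f 0 with hgd
  have hg : Measurable g := me_prod.measurable_extend hf measurable_zero
  have hfg : ∀ z : UpperHalfPlane, g (z.re, z.im) = f z := 
    fun z => me_prod.injective.extend_apply f 0 z
  clear_value g
  have hM := S1_meas g hg
  set G : ℝ → ℝ≥0∞ := fun x => ∫⁻ y in Ioi (0:ℝ), 
    ENNReal.ofReal (y ^ (-(3/2) : ℝ)) * MA volume S1 (fun x' => g (x', y)) x with hG
  have mG : Measurable G := by
    refine Measurable.lintegral_prod_right' (f := fun z : ℝ × ℝ => 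
      ENNReal.ofReal (z.2 ^ (-(3/2) : ℝ)) * MA volume S1 (fun x' => g (x', z.2)) z.1) ?_
    exact Measurable.mul (by fun_prop) hM
  have hpt : ∀ z, MA hypMeasure SL f z ≤ ENNReal.ofReal (36 * √z.im) * G z.re := 
    fun z => large_pt f g hg hfg z
  set φ : ℝ × ℝ → ℝ≥0∞ := fun z => 
    if ENNReal.ofReal s < ENNReal.ofReal (36 * √z.2) * G z.1 then 1 else 0 with hφ
  have mφ : Measurable φ := by
    refine Measurable.ite (measurableSet_lt measurable_const ?_) measurable_const measurable_const
    exact Measurable.mul (by fun_prop) (mG.comp measurable_fst)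
  have mset : MeasurableSet {z | ENNReal.ofReal s < MA hypMeasure SL f z} := 
    measurableSet_lt measurable_const (MA_measurable _ _ _)
  have mF : ∀ a : ℝ, Measurable (fun z : ℝ × ℝ => ENNReal.ofReal (1 / z.2 ^ 2) *
      (MA volume S1 (fun x' => g (x', z.2)) z.1 / ENNReal.ofReal s) ^ a) := fun a => 
    Measurable.mul (by fun_prop) ((hM.div_const _).pow_const _)
  have hGs : ∀ x, (G x / ENNReal.ofReal s) ^ 2 ≤ C0 * (
      (∫⁻ y in Ioi (0:ℝ), ENNReal.ofReal (1 / y ^ 2) * 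
        (MA volume S1 (fun x' => g (x', y)) x / ENNReal.ofReal s) ^ (3/2 : ℝ)) + 
      ∫⁻ y in Ioi (0:ℝ), ENNReal.ofReal (1 / y ^ 2) * 
        (MA volume S1 (fun x' => g (x', y)) x / ENNReal.ofReal s) ^ q) := by
    intro x
    have := H0 (fun y => MA volume S1 (fun x' => g (x', y)) x / ENNReal.ofReal s) 
      ((hM.comp measurable_prodMk_left).div_const _)
    refine le_trans (le_of_eq ?_) this
    congr 1
    simp only [hG, div_eq_mul_inv]
    rw [← lintegral_mul_const' _ _ (ENNReal.inv_ne_top.2 hs0)]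
    simp_rw [mul_assoc]
  calc hypMeasure {z | ENNReal.ofReal s < MA hypMeasure SL f z} 
      = ∫⁻ z, indicator {z | ENNReal.ofReal s < MA hypMeasure SL f z} 1 z ∂hypMeasure := 
        (lintegral_indicator_one mset).symm
    _ ≤ ∫⁻ z, φ (z.re, z.im) ∂hypMeasure := by
        refine lintegral_mono fun z => ?_
        by_cases hz : ENNReal.ofReal s < MA hypMeasure SL f z
        · rw [indicator_of_mem (by exact hz)]
          simp only [hφ]
          rw [if_pos (hz.trans_le (hpt z))]
          rfl
        · rw [indicator_of_notMem (by exact hz)]; exact zero_le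
    _ = ∫⁻ x, ∫⁻ y in Ioi (0:ℝ), ENNReal.ofReal (1 / y ^ 2) * φ (x, y) := by
        rw [hyp_lintegral φ mφ, swap_hyp φ mφ]
    _ ≤ ∫⁻ x, ENNReal.ofReal (36 ^ 2) * (C0 * (
      (∫⁻ y in Ioi (0:ℝ), ENNReal.ofReal (1 / y ^ 2) * 
        (MA volume S1 (fun x' => g (x', y)) x / ENNReal.ofReal s) ^ (3/2 : ℝ)) + 
      ∫⁻ y in Ioi (0:ℝ), ENNReal.ofReal (1 / y ^ 2) * 
        (MA volume S1 (fun x' => g (x', y)) x / ENNReal.ofReal s) ^ q)) := by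
        refine lintegral_mono fun x => ?_
        exact (fiber_le (G x) s hs).trans (mul_le_mul_right (hGs x) _)
    _ = ENNReal.ofReal (36 ^ 2) * C0 * (
      (∫⁻ x, ∫⁻ y in Ioi (0:ℝ), ENNReal.ofReal (1 / y ^ 2) * 
        (MA volume S1 (fun x' => g (x', y)) x / ENNReal.ofReal s) ^ (3/2 : ℝ)) + 
      ∫⁻ x, ∫⁻ y in Ioi (0:ℝ), ENNReal.ofReal (1 / y ^ 2) * 
        (MA volume S1 (fun x' => g (x', y)) x / ENNReal.ofReal s) ^ q) := by
        rw [lintegral_const_mul' _ _ ENNReal.ofReal_ne_top, lintegral_const_mul' _ _ hC0,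
          lintegral_add_left (Measurable.lintegral_prod_right' (mF (3/2))), mul_assoc]
    _ ≤ ENNReal.ofReal (36 ^ 2) * C0 * (C1 * ∫⁻ z, (f z / ENNReal.ofReal s) ^ (3/2 : ℝ) ∂hypMeasure + 
        C2 * ∫⁻ z, (f z / ENNReal.ofReal s) ^ q ∂hypMeasure) := by
        refine mul_le_mul_right (add_le_add ?_ ?_) _
        · exact S1_scaled (3/2) (by norm_num) C1 H1 s hs f g hg hfg
        · exact S1_scaled q (by linarith) C2 H2 s hs f g hg hfg
    _ ≤ _ := by
        rw [mul_assoc _ (C1 + C2), mul_add (C1 + C2)]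
        refine mul_le_mul_right (add_le_add ?_ ?_) _
        · exact mul_le_mul_left le_self_add _
        · exact mul_le_mul_left le_add_self _

lemma SL_strong (p : ℝ) (hp : 2 < p) : ∃ C : ℝ≥0∞, C ≠ ⊤ ∧ ∀ f : UpperHalfPlane → ℝ≥0∞, Measurable f →
    ∫⁻ x, MA hypMeasure SL f x ^ p ∂hypMeasure ≤ C * ∫⁻ x, f x ^ p ∂hypMeasure := by
  obtain ⟨K, hK, H⟩ := large_weak ((2 + p) / 2) (by linarith)
  refine ⟨2 ^ p * (ENNReal.ofReal p * K * (ENNReal.ofReal (1 / (p - 3/2)) + 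
    ENNReal.ofReal (1 / (p - (2 + p) / 2)))), by finiteness, fun f hf => ?_⟩
  have hm := MA_measurable hypMeasure SL f
  have main := interp hypMeasure (fun x => 2⁻¹ * MA hypMeasure SL f x) f (hm.const_mul _) hf p (3/2) 
    ((2 + p) / 2) (by norm_num) (by linarith) (by linarith) (by linarith) K ?_
  · have : ∀ x, MA hypMeasure SL f x ^ p = 2 ^ p * (2⁻¹ * MA hypMeasure SL f x) ^ p := by
      intro x
      rw [← ENNReal.mul_rpow_of_nonneg _ _ (by linarith), ← mul_assoc, 
        ENNReal.mul_inv_cancel (by simp) (by simp), one_mul]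
    simp_rw [this]
    rw [lintegral_const_mul _ (by fun_prop), mul_assoc]
    exact mul_le_mul_right main _
  · intro s hs
    refine le_trans (measure_mono ?_) (H (fun x => if ENNReal.ofReal s < f x then f x else 0) 
      (Measurable.ite (measurableSet_lt measurable_const hf) hf measurable_const) s hs)
    intro x hx
    exact MA_half hypMeasure SL f s x hx

/-- The noncentered maximal operator `M₂` is bounded on `L^p(ℍ)` for every `p ∈ (2,∞)`. -/
theorem M2_Lp (p : ℝ) (hp : 2 < p) :
    ∃ C : ℝ≥0, ∀ f : UpperHalfPlane → ℝ≥0∞, Measurable f →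
      ∫⁻ z, M2 f z ^ p ∂hypMeasure ≤ C * ∫⁻ z, f z ^ p ∂hypMeasure := by
  obtain ⟨C1, hC1, H1⟩ := SS_strong p (by linarith)
  obtain ⟨C2, hC2, H2⟩ := SL_strong p hp
  refine ⟨(C1 + C2).toNNReal, fun f hf => ?_⟩
  rw [ENNReal.coe_toNNReal (by finiteness), add_mul]
  refine le_trans ?_ (add_le_add (H1 f hf) (H2 f hf))
  rw [← lintegral_add_left ((MA_measurable _ _ _).pow_const _)]
  refine lintegral_mono fun z => ?_
  have hle : M2 f z ≤ max (MA hypMeasure SS f z) (MA hypMeasure SL f z) := by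
    unfold M2
    refine iSup₂_le fun c r => iSup₂_le fun hr hz => ?_
    rcases le_or_gt r 2 with h | h
    · exact (le_MA (b := (c, r)) (S := SS) ⟨hr, h⟩ hz).trans (le_max_left _ _)
    · exact (le_MA (b := (c, r)) (S := SL) h hz).trans (le_max_right _ _)
  rcases le_total (MA hypMeasure SS f z) (MA hypMeasure SL f z) with h | h
  · rw [max_eq_right h] at hle
    exact (ENNReal.rpow_le_rpow hle (by linarith)).trans le_add_self
  · rw [max_eq_left h] at hle
    exact (ENNReal.rpow_le_rpow hle (by linarith)).trans le_self_add

end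
end
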